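/- arXiv:1603.00742 — 4 statements merged into one kernel-verified Lean document; each statement's English description precedes it below -/
import Mathlib

section
/- Fix d >= 1. Let sigma_* : X_d -> X_d be the linear involution with sigma_*(Lambda_i) = Lambda_{-i} and sigma_*(delta) = delta, and for a bipartition mu and t ∈ Z set wt(Theta_t(mu)) := sigma_*^t(wt(mu, t)). For bipartitions mu, mu' and integers t, t', one has wt(Theta_t(mu)) = wt(Theta_{t'}(mu')) if and only if |mu^1| + |mu^2| + t(t+1) = |mu'^1| + |mu'^2| + t'(t'+1) and (mu, t), (mu', t') are connected by a finite sequence of d-cohook removals and d-cohook additions. -/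
/-! Write `X = β_t(μ¹)` and `Y = β_{d-1-t}(μ²)`.

**Regularised sums.** If `G c - G (c - 1) = φ c` for all `c`, then
`G c + ∑_i (φ (λ_{i+1} + c - i) - φ (c - i))` behaves like the divergent sum of `φ` over
`β_c(λ)`: it changes by `∓ φ x` when `x` is removed from or added to the beta-set (`regularised`,
`regularised_remove`, `regularised_add`). The size of a partition and the level one part of the
weight are both of this form. For the weight the summand is
`phiX x = Λ_x - Λ_{x-1} - ⌊(x-1)/2d⌋ δ`, because `α_x = phiX x - phiX (x + 1)` and because
`Δ(c, 2d) - Δ(c-1, 2d) = ⌊(c-1)/2d⌋`.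

**Effect of a cohook.** Since `phiX (y - 2d) = phiX y + δ`, removing a `d`-cohook adds `δ/2` to
`wt(μ, t)` and lowers the rank `|μ¹| + |μ²| + t(t+1)` by `d` (`remove_effect`). Hence
`wt + (rank / 2d) δ` is constant on connected classes (`connected_invariant`).

**Cocores.** Removals lower the rank, which is non-negative, so every charged bipartition is
connected to one without removable cohooks, that is, with `X ⊆ Y` and `Y - 2d ⊆ X`. On each residue
class modulo `2d` the positions of `X` and `Y` form a single chain along which a removal moves a
bead one step down, and a cocore is an initial segment of each chain. It is therefore determined by
its numbers of beads on the chains. The `Λ`-coefficients of the weight are the differences of these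
numbers for consecutive residues, and their sum is fixed by the total charge `d - 1`, so the
`Λ`-coefficients determine the cocore (`cocore_unique`) and thus the connected class.

**The twist.** `Δ(v, 2d)` is an integer, so the `δ`-coefficient of `wt(μ, t)`, which `σ_*` fixes,
is `-t/2` modulo `1`. Equality of twisted weights, and likewise equality of untwisted ones, forces
`t ≡ t'` modulo `2`, and then the two twists agree as `σ_*` is an involution. -/

/-- A partition, encoded as an antitone, eventually-zero sequence of naturals;
`f i` is the part `λ_{i+1}` (so indexing is shifted by one). -/
def IsPartition (f : ℕ → ℕ) : Prop :=
  Antitone f ∧ ∃ N, ∀ i, N ≤ i → f i = 0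

/-- The beta-set `β_d(λ) = {λ_u + d + 1 - u : u ≥ 1}` of the charged partition `(λ, d)`
(with `u = i + 1`). -/
def betaSet (f : ℕ → ℕ) (d : ℤ) : Set ℤ :=
  {x | ∃ i : ℕ, x = (f i : ℤ) + d - i}

/-- The size `|λ| = ∑ λ_u`. -/
noncomputable def psize (f : ℕ → ℕ) : ℕ := ∑' i, f i

/-- Lusztig's `a`-function, `a(λ) = ∑_{u ≥ 1} (u - 1) λ_u`. -/
noncomputable def aFun (f : ℕ → ℕ) : ℕ := ∑' i, i * f i

/-- The type of partitions. -/
abbrev PartitionT := {f : ℕ → ℕ // IsPartition f}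

/-- `AddHook e lam nu d x` : the charged partition `(nu, d)` is obtained from `(lam, d)`
by adding the `e`-hook `(x, x + e)`. -/
def AddHook (e : ℤ) (lam nu : ℕ → ℕ) (d : ℤ) (x : ℤ) : Prop :=
  x ∈ betaSet lam d ∧ x + e ∉ betaSet lam d ∧
    betaSet nu d = (betaSet lam d \ {x}) ∪ {x + e}

/-- `TauCharge l f c s` : `s ∈ ℤ^l` is the charge component of `τ_l(f, c)`, i.e. there is an
`l`-tuple of partitions `ν` with `β_c(f) = ⊔_{p=1}^{l} (p - l + l·β_{s_p}(ν^p))`. -/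
def TauCharge (l : ℕ) (f : ℕ → ℕ) (c : ℤ) (s : Fin l → ℤ) : Prop :=
  ∃ ν : Fin l → (ℕ → ℕ), (∀ p, IsPartition (ν p)) ∧
    betaSet f c =
      ⋃ p : Fin l, (fun b => ((p : ℕ) : ℤ) + 1 - (l : ℤ) + (l : ℤ) * b) '' betaSet (ν p) (s p)

/-- `lam` is an `e`-core: `(lam, 0)` has no `e`-hook. -/
def IsECore (e : ℕ) (f : ℕ → ℕ) : Prop :=
  ¬ ∃ x : ℤ, x + (e : ℤ) ∈ betaSet f 0 ∧ x ∉ betaSet f 0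

/-- `(n1, n2, t')` is obtained from the charged bipartition `(m1, m2, t)` by removing a
`d`-cohook, where `X = β_t(m1)` and `Y = β_{d-1-t}(m2)`. -/
def RemoveCohook (d : ℕ) (m1 m2 : ℕ → ℕ) (t : ℤ) (n1 n2 : ℕ → ℕ) (t' : ℤ) : Prop :=
  (∃ x : ℤ, x ∈ betaSet m1 t ∧ x ∉ betaSet m2 ((d : ℤ) - 1 - t) ∧ t' = t - 1 ∧
      betaSet n1 t' = betaSet m1 t \ {x} ∧
      betaSet n2 ((d : ℤ) - 1 - t') = betaSet m2 ((d : ℤ) - 1 - t) ∪ {x}) ∨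
  (∃ y : ℤ, y ∈ betaSet m2 ((d : ℤ) - 1 - t) ∧ y - 2 * (d : ℤ) ∉ betaSet m1 t ∧ t' = t + 1 ∧
      betaSet n1 t' = betaSet m1 t ∪ {y - 2 * (d : ℤ)} ∧
      betaSet n2 ((d : ℤ) - 1 - t') = betaSet m2 ((d : ℤ) - 1 - t) \ {y})

instance instNeZeroTwoMul (d : ℕ) [NeZero d] : NeZero (2 * d) :=
  ⟨Nat.mul_ne_zero two_ne_zero (NeZero.ne d)⟩

/-- `X_d`: the `ℚ`-vector space with basis `{Λ_i : i ∈ ℤ/2d} ∪ {δ}`. -/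
abbrev Xspace (d : ℕ) : Type := Option (ZMod (2 * d)) →₀ ℚ

/-- The fundamental weight `Λ_i`. -/
noncomputable def Lam (d : ℕ) (i : ZMod (2 * d)) : Xspace d := Finsupp.single (some i) 1

/-- The basis vector `δ`. -/
noncomputable def deltaX (d : ℕ) : Xspace d := Finsupp.single none 1

/-- The simple root `α_i = 2Λ_i - Λ_{i-1} - Λ_{i+1} + ε_i δ`, with `ε_i = 1` iff `i = 0`. -/
noncomputable def alphaX (d : ℕ) (i : ZMod (2 * d)) : Xspace d :=
  2 • Lam d i - Lam d (i - 1) - Lam d (i + 1) + (if i = 0 then deltaX d else 0)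

/-- `Δ(v, e) = (v̄ (1 - v̄/e) + v (v/e - 1)) / 2` where `v̄ ∈ {0, …, e-1}` and `v̄ ≡ v (mod e)`. -/
noncomputable def DeltaQ (v : ℤ) (e : ℕ) : ℚ :=
  ((Int.emod v e : ℤ) * (1 - ((Int.emod v e : ℤ) : ℚ) / e) + v * ((v : ℚ) / e - 1)) / 2

/-- The number of boxes of the partition `f` whose `c`-shifted content is `≡ i (mod 2d)`
(boxes are `0`-indexed: `(a, b)` with `b < f a` has shifted content `c + b - a`). -/
noncomputable def nBox (d : ℕ) (f : ℕ → ℕ) (c : ℤ) (i : ZMod (2 * d)) : ℕ :=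
  Set.ncard {p : ℕ × ℕ | p.2 < f p.1 ∧ ((c + (p.2 : ℤ) - (p.1 : ℤ) : ℤ) : ZMod (2 * d)) = i}

/-- The weight `wt(μ, t) = Λ_{[t]} + Λ_{[d-1-t]} - ∑_i n_i(μ,t) α_i
- (Δ(t,2d) + Δ(d-1-t,2d) + t/2) δ` of the charged bipartition `(μ¹, μ², t)`. -/
noncomputable def wt (d : ℕ) [NeZero d] (f g : ℕ → ℕ) (t : ℤ) : Xspace d :=
  Lam d (t : ZMod (2 * d)) + Lam d (((d : ℤ) - 1 - t : ℤ) : ZMod (2 * d))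
    - ∑ i : ZMod (2 * d),
        ((nBox d f t i + nBox d g ((d : ℤ) - 1 - t) i : ℕ) : ℚ) • alphaX d i
    - (DeltaQ t (2 * d) + DeltaQ ((d : ℤ) - 1 - t) (2 * d) + (t : ℚ) / 2) • deltaX d

/-- The linear involution `σ_*` of `X_d`, with `σ_*(Λ_i) = Λ_{-i}` and `σ_*(δ) = δ`. -/
noncomputable def sigmaStar (d : ℕ) : Xspace d ≃ₗ[ℚ] Xspace d :=
  Finsupp.domLCongr (Equiv.optionCongr (Equiv.neg (ZMod (2 * d))))

/-- The weight `wt(Θ_t(μ)) := σ_*^t (wt(μ, t))` of the symbol `Θ_t(μ)`. -/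
noncomputable def wtTheta (d : ℕ) [NeZero d] (f g : ℕ → ℕ) (t : ℤ) : Xspace d :=
  (sigmaStar d ^ t) (wt d f g t)

/-- One step: a `d`-cohook removal or a `d`-cohook addition between charged bipartitions. -/
def CohookStep (d : ℕ) (a b : (PartitionT × PartitionT) × ℤ) : Prop :=
  RemoveCohook d a.1.1.1 a.1.2.1 a.2 b.1.1.1 b.1.2.1 b.2 ∨
    RemoveCohook d b.1.1.1 b.1.2.1 b.2 a.1.1.1 a.1.2.1 a.2

/-- Connectedness by a finite sequence of `d`-cohook removals and additions. -/
def CohookConnected (d : ℕ) : ((PartitionT × PartitionT) × ℤ) →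
    ((PartitionT × PartitionT) × ℤ) → Prop :=
  Relation.ReflTransGen (CohookStep d)

/-! ### Truncated beta-sets and regularised sums -/

/-- `Low f c M`: the charged partition `(f, c)` agrees with the vacuum at and below `M`, i.e.
`f` vanishes at all indices `i` with `c - i ≤ M`. In particular `betaSet f c` contains all
integers `≤ M`. -/
def Low (f : ℕ → ℕ) (c M : ℤ) : Prop :=
  M ≤ c ∧ ∀ i : ℕ, c - M ≤ (i : ℤ) → f i = 0

/-- The finite set of the `c - M` largest elements of `betaSet f c`; for `Low f c M` these are
the elements `> M`. -/
def above (f : ℕ → ℕ) (c M : ℤ) : Finset ℤ :=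
  (Finset.range (c - M).toNat).image (fun i => (f i : ℤ) + c - i)

lemma exists_low {f : ℕ → ℕ} (hf : IsPartition f) (c : ℤ) :
    ∃ M0, ∀ M ≤ M0, Low f c M := by
  obtain ⟨_, N, hN⟩ := hf
  exact ⟨c - N, fun M hM => ⟨by omega, fun i hi => hN i (by omega)⟩⟩

lemma beta_strictAnti {f : ℕ → ℕ} (hf : IsPartition f) (c : ℤ) :
    StrictAnti (fun i : ℕ => (f i : ℤ) + c - i) := by
  intro i j hij
  have := hf.1 hij.le
  simp only
  omega

lemma mem_above {f : ℕ → ℕ} {c M : ℤ} (hM : Low f c M) (x : ℤ) :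
    x ∈ above f c M ↔ x ∈ betaSet f c ∧ M < x := by
  simp only [above, Finset.mem_image, Finset.mem_range, betaSet, Set.mem_ofPred_eq]
  constructor
  · rintro ⟨i, hi, rfl⟩
    exact ⟨⟨i, rfl⟩, by omega⟩
  · rintro ⟨⟨i, rfl⟩, hx⟩
    refine ⟨i, ?_, rfl⟩
    by_contra h
    have := hM.2 i (by omega)
    have := hM.1
    omega

lemma mem_beta_of_le {f : ℕ → ℕ} {c M : ℤ} (hM : Low f c M) {x : ℤ} (hx : x ≤ M) :
    x ∈ betaSet f c := by
  have h1 := hM.1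
  refine ⟨(c - x).toNat, ?_⟩
  rw [hM.2 _ (by omega)]
  omega

lemma sum_above {A : Type*} [AddCommGroup A] (φ : ℤ → A) {f : ℕ → ℕ} (hf : IsPartition f)
    (c M : ℤ) :
    ∑ x ∈ above f c M, φ x = ∑ i ∈ Finset.range (c - M).toNat, φ ((f i : ℤ) + c - i) := by
  rw [above, Finset.sum_image]
  exact fun i _ j _ h => (beta_strictAnti hf c).injective h

lemma card_above {f : ℕ → ℕ} (hf : IsPartition f) (c M : ℤ) :
    (above f c M).card = (c - M).toNat := by
  rw [above, Finset.card_image_of_injective _ (beta_strictAnti hf c).injective, Finset.card_range]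

lemma telescope {A : Type*} [AddCommGroup A] (φ G : ℤ → A) (hG : ∀ c, G c = G (c - 1) + φ c)
    (c : ℤ) (n : ℕ) : G c = G (c - n) + ∑ i ∈ Finset.range n, φ (c - i) := by
  induction n with
  | zero => simp
  | succ n ih =>
    rw [ih, hG (c - n), Finset.sum_range_succ]
    have : c - (n : ℤ) - 1 = c - ((n + 1 : ℕ) : ℤ) := by push_cast; ring
    rw [this]
    abel

/-- If `G` is a discrete primitive of `φ`, the sum over the rows of a charged partition, based at
the vacuum value `G c`, is the sum of `φ` over the beta-set truncated at `M`, based at `G M`.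
So it behaves like a sum of `φ` over all of the beta-set. -/
lemma regularised {A : Type*} [AddCommGroup A] (φ G : ℤ → A)
    (hG : ∀ c, G c = G (c - 1) + φ c) {f : ℕ → ℕ} (hf : IsPartition f) {c M : ℤ}
    (hM : Low f c M) :
    G c + ∑ i ∈ Finset.range (c - M).toNat, (φ ((f i : ℤ) + c - i) - φ (c - i)) =
      G M + ∑ x ∈ above f c M, φ x := by
  rw [sum_above φ hf, Finset.sum_sub_distrib]
  have h := telescope φ G hG c (c - M).toNat
  have h1 := hM.1
  have : c - ((c - M).toNat : ℤ) = M := by omega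
  rw [this] at h
  rw [h]
  abel

/-! ### Removing and adding a single beta-number -/

lemma exists_remove {f : ℕ → ℕ} (hf : IsPartition f) {c x : ℤ} (hx : x ∈ betaSet f c) :
    ∃ f' : PartitionT, betaSet f'.1 (c - 1) = betaSet f c \ {x} := by
  obtain ⟨k, rfl⟩ := hx
  have hinj := (beta_strictAnti hf c).injective
  obtain ⟨ha, N, hN⟩ := hf
  refine ⟨⟨fun i => if i < k then f i + 1 else f (i + 1), ?_, N + k, ?_⟩, ?_⟩
  · apply antitone_nat_of_succ_le
    intro n
    have h1 := ha (Nat.le_succ n)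
    have h2 := ha (Nat.le_succ (n + 1))
    simp only [Nat.succ_eq_add_one] at h1 h2
    split_ifs <;> omega
  · intro i hi
    simp only
    rw [if_neg (by omega)]
    exact hN _ (by omega)
  · ext z
    simp only [betaSet, Set.mem_ofPred_eq, Set.mem_sdiff, Set.mem_singleton_iff]
    constructor
    · rintro ⟨i, rfl⟩
      by_cases h : i < k
      · rw [if_pos h]
        refine ⟨⟨i, by push_cast; ring⟩, fun h' => ?_⟩
        have := @hinj i k (by simp only; push_cast at h'; linarith)
        omega
      · rw [if_neg h]
        refine ⟨⟨i + 1, by push_cast; ring⟩, fun h' => ?_⟩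
        have := @hinj (i + 1) k (by simp only; push_cast at h' ⊢; linarith)
        omega
    · rintro ⟨⟨i, rfl⟩, hne⟩
      rcases lt_trichotomy i k with h | h | h
      · exact ⟨i, by rw [if_pos h]; push_cast; ring⟩
      · subst h; exact absurd rfl hne
      · refine ⟨i - 1, ?_⟩
        rw [if_neg (by omega), Nat.sub_add_cancel (by omega)]
        omega

lemma exists_add {f : ℕ → ℕ} (hf : IsPartition f) {c x : ℤ} (hx : x ∉ betaSet f c) :
    ∃ f' : PartitionT, betaSet f'.1 (c + 1) = betaSet f c ∪ {x} := by
  have hanti := beta_strictAnti hf c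
  obtain ⟨ha, N, hN⟩ := hf
  have hex : ∃ k : ℕ, (f k : ℤ) + c - k < x := by
    refine ⟨N + (c - x).toNat + 1, ?_⟩
    rw [hN _ (by omega)]
    omega
  classical
  -- `k` is the rank at which `x` is inserted in the decreasing list of beta-numbers.
  obtain ⟨k, hk, hmin⟩ : ∃ k : ℕ, (f k : ℤ) + c - k < x ∧
      ∀ i < k, x < (f i : ℤ) + c - i := by
    refine ⟨Nat.find hex, Nat.find_spec hex, fun i hi => ?_⟩
    have h1 := Nat.find_min hex hi
    have h2 : x ≠ (f i : ℤ) + c - i := fun h => hx ⟨i, h⟩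
    omega
  have hpos : ∀ i < k, 1 ≤ f i := by
    intro i hi
    have h1 := hmin (k - 1) (by omega)
    have h2 := ha (show i ≤ k - 1 by omega)
    omega
  refine ⟨⟨fun i => if i < k then f i - 1 else if i = k then (x - (c + 1) + k).toNat
      else f (i - 1), ?_, N + k + 1, ?_⟩, ?_⟩
  · apply antitone_nat_of_succ_le
    intro n
    have h1 := ha (Nat.le_succ n)
    have h2 := ha (Nat.sub_le n 1)
    have h3 := hpos n
    have h4 := hpos (n + 1)
    have h5 := hmin n
    simp only [Nat.succ_eq_add_one] at h1 h2
    simp only [Nat.add_sub_cancel]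
    rcases lt_trichotomy (n + 1) k with h | h | h
    · rw [if_pos h, if_pos (by omega)]; omega
    · rw [if_neg (by omega), if_pos h, if_pos (by omega)]
      have := h5 (by omega)
      omega
    · rw [if_neg (by omega), if_neg (by omega), if_neg (by omega)]
      split_ifs with h'
      · subst h'; omega
      · exact h2
  · intro i hi
    simp only
    rw [if_neg (by omega), if_neg (by omega)]
    exact hN _ (by omega)
  · ext z
    simp only [betaSet, Set.mem_ofPred_eq, Set.mem_union, Set.mem_singleton_iff]
    constructor
    · rintro ⟨i, rfl⟩
      rcases lt_trichotomy i k with h | h | h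
      · left
        refine ⟨i, ?_⟩
        rw [if_pos h]
        have := hpos i h
        omega
      · right
        rw [if_neg (by omega), if_pos h]
        omega
      · left
        refine ⟨i - 1, ?_⟩
        rw [if_neg (by omega), if_neg (by omega)]
        omega
    · rintro (⟨i, rfl⟩ | rfl)
      · by_cases h : i < k
        · refine ⟨i, ?_⟩
          rw [if_pos h]
          have := hpos i h
          omega
        · refine ⟨i + 1, ?_⟩
          rw [if_neg (by omega), if_neg (by omega), Nat.add_sub_cancel]
          omega
      · refine ⟨k, ?_⟩
        rw [if_neg (by omega), if_pos rfl]
        omega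

/-- A quantity that is a regularised sum of `φ` over the beta-set drops by `φ x` when `x` is
removed from the beta-set. -/
lemma regularised_remove {A : Type*} [AddCommGroup A] (φ G : ℤ → A) (E : (ℕ → ℕ) → ℤ → A)
    (hE : ∀ (f : ℕ → ℕ) (c M : ℤ), IsPartition f → Low f c M →
      E f c = G M + ∑ x ∈ above f c M, φ x)
    {f f' : ℕ → ℕ} {c c' x : ℤ} (hf : IsPartition f) (hf' : IsPartition f')
    (hx : x ∈ betaSet f c) (hβ : betaSet f' c' = betaSet f c \ {x}) :
    E f' c' = E f c - φ x := by
  obtain ⟨M1, h1⟩ := exists_low hf c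
  obtain ⟨M2, h2⟩ := exists_low hf' c'
  obtain ⟨M, hM1, hM2, hMx⟩ : ∃ M, M ≤ M1 ∧ M ≤ M2 ∧ M < x :=
    ⟨min (min M1 M2) (x - 1), by omega, by omega, by omega⟩
  rw [hE f c M hf (h1 M hM1), hE f' c' M hf' (h2 M hM2)]
  have hmem : x ∈ above f c M := (mem_above (h1 M hM1) x).2 ⟨hx, hMx⟩
  have : above f' c' M = (above f c M).erase x := by
    ext z
    rw [mem_above (h2 M hM2), Finset.mem_erase, mem_above (h1 M hM1), hβ]
    simp only [Set.mem_sdiff, Set.mem_singleton_iff]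
    tauto
  rw [this, ← Finset.add_sum_erase _ _ hmem]
  abel

lemma regularised_add {A : Type*} [AddCommGroup A] (φ G : ℤ → A) (E : (ℕ → ℕ) → ℤ → A)
    (hE : ∀ (f : ℕ → ℕ) (c M : ℤ), IsPartition f → Low f c M →
      E f c = G M + ∑ x ∈ above f c M, φ x)
    {f f' : ℕ → ℕ} {c c' x : ℤ} (hf : IsPartition f) (hf' : IsPartition f')
    (hx : x ∉ betaSet f c) (hβ : betaSet f' c' = betaSet f c ∪ {x}) :
    E f' c' = E f c + φ x := by
  have := regularised_remove φ G E hE (c := c') (c' := c) (x := x) hf' hf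
    (by rw [hβ]; simp) (by rw [hβ]; ext z; simp only [Set.mem_sdiff, Set.mem_union,
      Set.mem_singleton_iff]; constructor
                           · exact fun h => ⟨Or.inl h, fun h' => hx (h' ▸ h)⟩
                           · tauto)
  rw [this]; abel

/-! ### The rank and the weight as regularised sums -/

lemma psize_eq_sum {f : ℕ → ℕ} {c M : ℤ} (hM : Low f c M) :
    psize f = ∑ i ∈ Finset.range (c - M).toNat, f i := by
  refine tsum_eq_sum fun i hi => hM.2 i ?_
  rw [Finset.mem_range] at hi
  omega

/-- Twice the regularised sum of the elements of the beta-set. -/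
noncomputable def energy (f : ℕ → ℕ) (c : ℤ) : ℤ := c * (c + 1) + 2 * psize f

lemma energy_eq (f : ℕ → ℕ) (c M : ℤ) (hf : IsPartition f) (hM : Low f c M) :
    energy f c = M * (M + 1) + ∑ x ∈ above f c M, 2 * x := by
  have h := regularised (fun x : ℤ => 2 * x) (fun c => c * (c + 1)) (fun c => by ring) hf hM
  rw [← h, energy, psize_eq_sum hM]
  push_cast
  rw [Finset.mul_sum]
  congr 1
  exact Finset.sum_congr rfl fun i _ => by ring

lemma DeltaQ_eq (d : ℕ) [NeZero d] (v : ℤ) :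
    DeltaQ v (2 * d) = (((v / (2 * d)) * (v % (2 * d)) +
      d * (v / (2 * d)) * (v / (2 * d) - 1) : ℤ) : ℚ) := by
  have hd : (d : ℚ) ≠ 0 := Nat.cast_ne_zero.2 (NeZero.ne d)
  have h1 : (v : ℚ) = 2 * d * ((v / (2 * d) : ℤ) : ℚ) + ((v % (2 * d) : ℤ) : ℚ) := by
    have := Int.mul_ediv_add_emod v (2 * d)
    exact_mod_cast this.symm
  unfold DeltaQ
  have h2 : Int.emod v ((2 * d : ℕ) : ℤ) = v % (2 * d) := by push_cast; rfl
  rw [h2, h1]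
  push_cast
  generalize ((v / (2 * d) : ℤ) : ℚ) = k
  generalize ((v % (2 * d) : ℤ) : ℚ) = r
  field_simp
  ring

lemma DeltaQ_succ (d : ℕ) [NeZero d] (c : ℤ) :
    DeltaQ c (2 * d) = DeltaQ (c - 1) (2 * d) + (((c - 1) / (2 * d) : ℤ) : ℚ) := by
  rw [DeltaQ_eq, DeltaQ_eq]
  have hd : (0 : ℤ) < d := by exact_mod_cast Nat.pos_of_ne_zero (NeZero.ne d)
  have h0 := Int.mul_ediv_add_emod (c - 1) (2 * d)
  have h1 := Int.emod_nonneg (c - 1) (show (2 * d : ℤ) ≠ 0 by omega)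
  have h2 := Int.emod_lt_of_pos (c - 1) (show (0 : ℤ) < 2 * d by omega)
  generalize (c - 1) / (2 * d : ℤ) = k at *
  generalize (c - 1) % (2 * d : ℤ) = r at *
  norm_cast
  push_cast
  rcases lt_or_ge (r + 1) (2 * d) with h | h
  · have hq : c / (2 * d : ℤ) = k := by
      rw [Int.ediv_eq_iff_of_pos (by omega)]
      constructor <;> nlinarith
    have hr : c % (2 * d : ℤ) = r + 1 := by
      have := Int.mul_ediv_add_emod c (2 * d)
      rw [hq] at this
      linarith
    rw [hq, hr]; ring
  · have hr' : r = 2 * d - 1 := by omega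
    have hq : c / (2 * d : ℤ) = k + 1 := by
      rw [Int.ediv_eq_iff_of_pos (by omega)]
      constructor <;> nlinarith
    have hr : c % (2 * d : ℤ) = 0 := by
      have := Int.mul_ediv_add_emod c (2 * d)
      rw [hq] at this
      linarith
    rw [hq, hr, hr']; ring

/-- The contribution of a single beta-number to the weight. -/
noncomputable def phiX (d : ℕ) (x : ℤ) : Xspace d :=
  Lam d (x : ZMod (2 * d)) - Lam d ((x - 1 : ℤ) : ZMod (2 * d))
    - (((x - 1) / (2 * d) : ℤ) : ℚ) • deltaX d

/-- The weight of the vacuum of charge `c`. -/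
noncomputable def vacX (d : ℕ) (c : ℤ) : Xspace d :=
  Lam d (c : ZMod (2 * d)) - DeltaQ c (2 * d) • deltaX d

/-- The level one weight of a charged partition. -/
noncomputable def wtOne (d : ℕ) [NeZero d] (f : ℕ → ℕ) (c : ℤ) : Xspace d :=
  vacX d c - ∑ i : ZMod (2 * d), (nBox d f c i : ℚ) • alphaX d i

lemma vacX_succ (d : ℕ) [NeZero d] (c : ℤ) : vacX d c = vacX d (c - 1) + phiX d c := by
  rw [vacX, vacX, phiX, DeltaQ_succ, add_smul]
  abel

lemma phiX_succ (d : ℕ) [NeZero d] (x : ℤ) :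
    phiX d (x + 1) - phiX d x = - alphaX d (x : ZMod (2 * d)) := by
  have hd : (0 : ℤ) < d := by exact_mod_cast Nat.pos_of_ne_zero (NeZero.ne d)
  have key : (((x / (2 * d) : ℤ) : ℚ) • deltaX d : Xspace d) =
      (((x - 1) / (2 * d) : ℤ) : ℚ) • deltaX d +
        (if (x : ZMod (2 * d)) = 0 then deltaX d else 0) := by
    have hz : (x : ZMod (2 * d)) = 0 ↔ ((2 * d : ℤ)) ∣ x := by
      rw [ZMod.intCast_zmod_eq_zero_iff_dvd]; push_cast; rfl
    have h0 := Int.mul_ediv_add_emod (x - 1) (2 * d)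
    have h1 := Int.emod_nonneg (x - 1) (show (2 * d : ℤ) ≠ 0 by omega)
    have h2 := Int.emod_lt_of_pos (x - 1) (show (0 : ℤ) < 2 * d by omega)
    split_ifs with h
    · obtain ⟨k, rfl⟩ := hz.1 h
      have e1 : (2 * d * k : ℤ) / (2 * d) = k := by
        rw [Int.ediv_eq_iff_of_pos (by omega)]
        constructor <;> nlinarith
      have e2 : (2 * d * k - 1 : ℤ) / (2 * d) = k - 1 := by
        rw [Int.ediv_eq_iff_of_pos (by omega)]
        constructor <;> nlinarith
      rw [e1, e2]; push_cast; rw [sub_smul, one_smul]; abel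
    · have hne : (x - 1) % (2 * d) + 1 ≠ 2 * d := by
        intro h'
        exact h (hz.2 ⟨(x - 1) / (2 * d) + 1, by linarith⟩)
      have : x / (2 * d : ℤ) = (x - 1) / (2 * d) := by
        rw [Int.ediv_eq_iff_of_pos (by omega)]
        have h3 : (x - 1) % (2 * d : ℤ) + 1 < 2 * d := by omega
        constructor <;> nlinarith
      rw [this, add_zero]
  rw [phiX, phiX, alphaX, add_sub_cancel_right, key]
  push_cast
  rw [two_smul]
  abel

/-- The finite set of boxes of `f`, listed row by row among the rows of index `< n`. -/
def boxes (f : ℕ → ℕ) (n : ℕ) : Finset ((_ : ℕ) × ℕ) :=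
  (Finset.range n).sigma fun a => Finset.range (f a)

lemma nBox_eq (d : ℕ) {f : ℕ → ℕ} {c M : ℤ} (hM : Low f c M) (i : ZMod (2 * d)) :
    nBox d f c i = ((boxes f (c - M).toNat).filter
      fun p => ((c + (p.2 : ℤ) - (p.1 : ℤ) : ℤ) : ZMod (2 * d)) = i).card := by
  rw [nBox, ← Set.ncard_coe_finset,
    ← Set.ncard_image_of_injective _ (Equiv.sigmaEquivProd ℕ ℕ).injective]
  congr 1
  ext ⟨a, b⟩
  simp only [boxes, Set.mem_ofPred_eq, Finset.coe_filter, Finset.mem_sigma, Finset.mem_range,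
    Set.mem_image, Equiv.sigmaEquivProd, Equiv.coe_fn_mk, Prod.mk.injEq, Sigma.exists]
  constructor
  · rintro ⟨h1, h2⟩
    refine ⟨a, b, ⟨⟨?_, h1⟩, h2⟩, rfl, rfl⟩
    by_contra h
    have := hM.2 a (by omega)
    omega
  · rintro ⟨a', b', ⟨⟨_, h1⟩, h2⟩, rfl, rfl⟩
    exact ⟨h1, h2⟩

lemma sum_nBox (d : ℕ) [NeZero d] {f : ℕ → ℕ} {c M : ℤ} (hM : Low f c M) :
    ∑ i : ZMod (2 * d), (nBox d f c i : ℚ) • alphaX d i =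
      - ∑ i ∈ Finset.range (c - M).toNat, (phiX d ((f i : ℤ) + c - i) - phiX d (c - i)) := by
  have h1 : ∑ i : ZMod (2 * d), (nBox d f c i : ℚ) • alphaX d i =
      ∑ p ∈ boxes f (c - M).toNat,
        alphaX d ((c + (p.2 : ℤ) - (p.1 : ℤ) : ℤ) : ZMod (2 * d)) := by
    rw [← Finset.sum_fiberwise _
      (fun p : (_ : ℕ) × ℕ => ((c + (p.2 : ℤ) - (p.1 : ℤ) : ℤ) : ZMod (2 * d)))]
    refine Finset.sum_congr rfl fun i _ => ?_
    rw [nBox_eq d hM, Finset.sum_congr rfl (g := fun _ => alphaX d i)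
      (fun p hp => by rw [(Finset.mem_filter.1 hp).2]), Finset.sum_const, Nat.cast_smul_eq_nsmul]
  rw [h1, boxes, Finset.sum_sigma, ← Finset.sum_neg_distrib]
  refine Finset.sum_congr rfl fun a _ => ?_
  have h2 : ∀ b ∈ Finset.range (f a), alphaX d ((c + (b : ℤ) - (a : ℤ) : ℤ) : ZMod (2 * d)) =
      - (phiX d (((b + 1 : ℕ) : ℤ) + c - a) - phiX d ((b : ℤ) + c - a)) := by
    intro b _
    have h3 := phiX_succ d (c + (b : ℤ) - (a : ℤ))
    rw [← neg_neg (alphaX d _), ← h3,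
      show ((b + 1 : ℕ) : ℤ) + c - a = c + b - a + 1 by push_cast; ring,
      show (b : ℤ) + c - a = c + b - a by ring]
  rw [Finset.sum_congr rfl h2, Finset.sum_neg_distrib,
    Finset.sum_range_sub (fun b : ℕ => phiX d ((b : ℤ) + c - a))]
  simp

lemma wtOne_eq (d : ℕ) [NeZero d] (f : ℕ → ℕ) (c M : ℤ) (hf : IsPartition f) (hM : Low f c M) :
    wtOne d f c = vacX d M + ∑ x ∈ above f c M, phiX d x := by
  rw [← regularised (phiX d) (vacX d) (vacX_succ d) hf hM, wtOne, sum_nBox d hM]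
  abel

lemma wt_eq (d : ℕ) [NeZero d] (f g : ℕ → ℕ) (t : ℤ) :
    wt d f g t = wtOne d f t + wtOne d g ((d : ℤ) - 1 - t) - ((t : ℚ) / 2) • deltaX d := by
  simp only [wt, wtOne, vacX, Nat.cast_add, add_smul, Finset.sum_add_distrib]
  abel

/-! ### Behaviour under cohook removal -/

lemma phiX_sub (d : ℕ) [NeZero d] (y : ℤ) :
    phiX d (y - 2 * d) = phiX d y + deltaX d := by
  have hd : (0 : ℤ) < d := by exact_mod_cast Nat.pos_of_ne_zero (NeZero.ne d)
  have h0 : ((2 * d : ℤ) : ZMod (2 * d)) = 0 := by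
    have := ZMod.natCast_self (2 * d)
    push_cast at this ⊢
    exact this
  have h1 : ((y - 2 * d : ℤ) : ZMod (2 * d)) = y := by
    rw [Int.cast_sub, h0, sub_zero]
  have h2 : ((y - 2 * d - 1 : ℤ) : ZMod (2 * d)) = ((y - 1 : ℤ) : ZMod (2 * d)) := by
    rw [Int.cast_sub, h1, Int.cast_sub]
  have h3 : (y - 2 * d - 1) / (2 * d : ℤ) = (y - 1) / (2 * d) - 1 := by
    rw [show y - 2 * (d : ℤ) - 1 = (y - 1) - 2 * d by ring, Int.sub_ediv_of_dvd _ dvd_rfl,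
      Int.ediv_self (by omega)]
  rw [phiX, phiX, h1, h2, h3]
  push_cast
  rw [sub_smul, one_smul]
  abel

/-- The rank `|μ¹| + |μ²| + t(t+1)` of the symbol of a charged bipartition. -/
noncomputable def rankZ (a : (PartitionT × PartitionT) × ℤ) : ℤ :=
  (psize a.1.1.1 : ℤ) + (psize a.1.2.1 : ℤ) + a.2 * (a.2 + 1)

/-- The weight `wt(μ, t)` of a charged bipartition, before the twist by `σ_*`. -/
noncomputable def wtA (d : ℕ) [NeZero d] (a : (PartitionT × PartitionT) × ℤ) : Xspace d :=
  wt d a.1.1.1 a.1.2.1 a.2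

lemma two_rank (d : ℕ) (a : (PartitionT × PartitionT) × ℤ) :
    2 * rankZ a = energy a.1.1.1 a.2 + energy a.1.2.1 ((d : ℤ) - 1 - a.2) + 2 * d * a.2
      - d * (d - 1) := by
  rw [rankZ, energy, energy]; ring

/-- Removing a `d`-cohook lowers the rank by `d` and raises the weight by `δ/2`: moving `x` from
`X` to `Y` does not change the sum of contributions of beta-numbers, so only `t` matters, and
moving `y ∈ Y` to `y - 2d ∈ X` contributes an additional `δ`. -/
lemma remove_effect (d : ℕ) [NeZero d] (a b : (PartitionT × PartitionT) × ℤ)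
    (h : RemoveCohook d a.1.1.1 a.1.2.1 a.2 b.1.1.1 b.1.2.1 b.2) :
    rankZ b = rankZ a - d ∧ wtA d b = wtA d a + (1 / 2 : ℚ) • deltaX d := by
  obtain ⟨⟨⟨m1, hm1⟩, ⟨m2, hm2⟩⟩, t⟩ := a
  obtain ⟨⟨⟨n1, hn1⟩, ⟨n2, hn2⟩⟩, t'⟩ := b
  have ha := two_rank d ⟨⟨⟨m1, hm1⟩, ⟨m2, hm2⟩⟩, t⟩
  have hb := two_rank d ⟨⟨⟨n1, hn1⟩, ⟨n2, hn2⟩⟩, t'⟩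
  simp only [wtA] at *
  rw [wt_eq, wt_eq]
  rcases h with ⟨x, hx1, hx2, ht, h1, h2⟩ | ⟨y, hy1, hy2, ht, h1, h2⟩
  · have e1 := regularised_remove _ _ energy energy_eq hm1 hn1 hx1 h1
    have e2 := regularised_add _ _ energy energy_eq hm2 hn2 hx2 h2
    have w1 := regularised_remove _ _ (wtOne d) (wtOne_eq d) hm1 hn1 hx1 h1
    have w2 := regularised_add _ _ (wtOne d) (wtOne_eq d) hm2 hn2 hx2 h2
    constructor
    · rw [e1, e2] at hb
      have : (d : ℤ) * t' = d * t - d := by rw [ht]; ring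
      linarith
    · rw [w1, w2, ht]
      push_cast
      module
  · have e1 := regularised_add _ _ energy energy_eq hm1 hn1 hy2 h1
    have e2 := regularised_remove _ _ energy energy_eq hm2 hn2 hy1 h2
    have w1 := regularised_add _ _ (wtOne d) (wtOne_eq d) hm1 hn1 hy2 h1
    have w2 := regularised_remove _ _ (wtOne d) (wtOne_eq d) hm2 hn2 hy1 h2
    constructor
    · rw [e1, e2] at hb
      have : (d : ℤ) * t' = d * t + d := by rw [ht]; ring
      linarith
    · rw [w1, w2, ht, phiX_sub]
      push_cast
      module

/-- The combination of weight and rank that is constant on cohook-connected classes. -/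
lemma connected_invariant (d : ℕ) [NeZero d] {a b : (PartitionT × PartitionT) × ℤ}
    (h : CohookConnected d a b) :
    wtA d a + ((rankZ a : ℚ) / (2 * d)) • deltaX d =
      wtA d b + ((rankZ b : ℚ) / (2 * d)) • deltaX d := by
  have hd : (d : ℚ) ≠ 0 := Nat.cast_ne_zero.2 (NeZero.ne d)
  have step : ∀ a b : (PartitionT × PartitionT) × ℤ,
      RemoveCohook d a.1.1.1 a.1.2.1 a.2 b.1.1.1 b.1.2.1 b.2 →
      wtA d a + ((rankZ a : ℚ) / (2 * d)) • deltaX d =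
        wtA d b + ((rankZ b : ℚ) / (2 * d)) • deltaX d := by
    intro a b h
    obtain ⟨h1, h2⟩ := remove_effect d a b h
    have : ((rankZ a - d : ℤ) : ℚ) / (2 * d) = (rankZ a : ℚ) / (2 * d) - 1 / 2 := by
      push_cast; field_simp
    rw [h1, h2, this]
    module
  induction h with
  | refl => rfl
  | tail _ h ih =>
    rw [ih]
    rcases h with h | h
    · exact step _ _ h
    · exact (step _ _ h).symm

/-! ### Cocores -/

lemma connected_symm (d : ℕ) {a b : (PartitionT × PartitionT) × ℤ}
    (h : CohookConnected d a b) : CohookConnected d b a := by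
  have : Std.Symm (CohookStep d) := ⟨fun _ _ h => h.symm⟩
  exact Relation.ReflTransGen.stdSymm.symm _ _ h

/-- `a` is a `d`-cocore, i.e. has no removable `d`-cohook: `X ⊆ Y` and `Y - 2d ⊆ X`. -/
def IsCocore (d : ℕ) (a : (PartitionT × PartitionT) × ℤ) : Prop :=
  (∀ x ∈ betaSet a.1.1.1 a.2, x ∈ betaSet a.1.2.1 ((d : ℤ) - 1 - a.2)) ∧
    ∀ y ∈ betaSet a.1.2.1 ((d : ℤ) - 1 - a.2), y - 2 * d ∈ betaSet a.1.1.1 a.2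

lemma rankZ_nonneg (a : (PartitionT × PartitionT) × ℤ) : 0 ≤ rankZ a := by
  have : 0 ≤ a.2 * (a.2 + 1) := by
    rcases le_or_gt 0 a.2 with h | h
    · positivity
    · nlinarith
  unfold rankZ
  positivity

lemma exists_removal (d : ℕ) (a : (PartitionT × PartitionT) × ℤ) (h : ¬ IsCocore d a) :
    ∃ b : (PartitionT × PartitionT) × ℤ,
      RemoveCohook d a.1.1.1 a.1.2.1 a.2 b.1.1.1 b.1.2.1 b.2 := by
  obtain ⟨⟨⟨m1, hm1⟩, ⟨m2, hm2⟩⟩, t⟩ := a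
  simp only [IsCocore, not_and_or, not_forall] at h
  rcases h with ⟨x, hx, hx'⟩ | ⟨y, hy, hy'⟩
  · obtain ⟨f, hf⟩ := exists_remove hm1 hx
    obtain ⟨g, hg⟩ := exists_add hm2 hx'
    refine ⟨⟨⟨f, g⟩, t - 1⟩, Or.inl ⟨x, hx, hx', rfl, hf, ?_⟩⟩
    rw [← hg]; congr 1; simp only; ring
  · obtain ⟨f, hf⟩ := exists_add hm1 hy'
    obtain ⟨g, hg⟩ := exists_remove hm2 hy
    refine ⟨⟨⟨f, g⟩, t + 1⟩, Or.inr ⟨y, hy, hy', rfl, hf, ?_⟩⟩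
    rw [← hg]; congr 1; simp only; ring

lemma exists_cocore (d : ℕ) [NeZero d] (n : ℕ) : ∀ a : (PartitionT × PartitionT) × ℤ,
    (rankZ a).toNat = n → ∃ b, CohookConnected d a b ∧ IsCocore d b := by
  induction n using Nat.strong_induction_on with
  | _ n ih =>
    intro a ha
    by_cases h : IsCocore d a
    · exact ⟨a, Relation.ReflTransGen.refl, h⟩
    · obtain ⟨b, hb⟩ := exists_removal d a h
      have hd : (0 : ℤ) < d := by exact_mod_cast Nat.pos_of_ne_zero (NeZero.ne d)
      have h1 := (remove_effect d a b hb).1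
      have h2 := rankZ_nonneg b
      obtain ⟨b', hb', hc⟩ := ih (rankZ b).toNat (by omega) b rfl
      exact ⟨b', Relation.ReflTransGen.head (Or.inl hb) hb', hc⟩

lemma chain_down {d : ℕ} {X Y : Set ℤ} (h1 : ∀ x ∈ X, x ∈ Y) (h2 : ∀ y ∈ Y, y - 2 * (d : ℤ) ∈ X)
    (k : ℕ) : ∀ y ∈ Y, y - 2 * (d : ℤ) * (k + 1 : ℕ) ∈ X := by
  induction k with
  | zero => intro y hy; simpa using h2 y hy
  | succ k ih =>
    intro y hy
    have := h2 _ (h1 _ (ih y hy))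
    convert this using 1
    push_cast; ring

/-- In a cocore, every integer strictly below an element of `Y` in the same residue class modulo
`2d` lies in `X`. -/
lemma chain_lt {d : ℕ} [NeZero d] {X Y : Set ℤ} (h1 : ∀ x ∈ X, x ∈ Y)
    (h2 : ∀ y ∈ Y, y - 2 * (d : ℤ) ∈ X) {x y : ℤ} (hy : y ∈ Y)
    (hxy : (x : ZMod (2 * d)) = y) (hlt : x < y) : x ∈ X := by
  have hd : (0 : ℤ) < d := by exact_mod_cast Nat.pos_of_ne_zero (NeZero.ne d)
  rw [ZMod.intCast_eq_intCast_iff_dvd_sub] at hxy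
  obtain ⟨k, hk⟩ := hxy
  push_cast at hk
  have hk0 : 0 < k := by
    by_contra h
    have : (2 * d : ℤ) * k ≤ 0 := mul_nonpos_of_nonneg_of_nonpos (by omega) (by omega)
    omega
  obtain ⟨n, rfl⟩ : ∃ n : ℕ, k = ((n + 1 : ℕ) : ℤ) := ⟨(k - 1).toNat, by omega⟩
  have := chain_down h1 h2 n y hy
  rwa [← hk, sub_sub_cancel] at this

/-- The beta-numbers `> M` on the runner `r ∈ ℤ/2d`: those of `X` on the left, those of `Y` on
the right. -/
def runner (d : ℕ) (M : ℤ) (a : (PartitionT × PartitionT) × ℤ) (r : ZMod (2 * d)) :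
    Finset (ℤ ⊕ ℤ) :=
  ((above a.1.1.1 a.2 M).filter fun x : ℤ => (x : ZMod (2 * d)) = r).disjSum
    ((above a.1.2.1 ((d : ℤ) - 1 - a.2) M).filter fun x : ℤ => (x : ZMod (2 * d)) = r)

/-- Both components of the charged bipartition `a` agree with the vacuum at and below `M`. -/
def LowA (d : ℕ) (M : ℤ) (a : (PartitionT × PartitionT) × ℤ) : Prop :=
  Low a.1.1.1 a.2 M ∧ Low a.1.2.1 ((d : ℤ) - 1 - a.2) M

lemma mem_runner_inl {d : ℕ} {M : ℤ} {a : (PartitionT × PartitionT) × ℤ} (hM : LowA d M a)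
    (r : ZMod (2 * d)) (x : ℤ) : Sum.inl x ∈ runner d M a r ↔
      (x ∈ betaSet a.1.1.1 a.2 ∧ M < x) ∧ (x : ZMod (2 * d)) = r := by
  rw [runner, Finset.inl_mem_disjSum, Finset.mem_filter, mem_above hM.1]

lemma mem_runner_inr {d : ℕ} {M : ℤ} {a : (PartitionT × PartitionT) × ℤ} (hM : LowA d M a)
    (r : ZMod (2 * d)) (x : ℤ) : Sum.inr x ∈ runner d M a r ↔
      (x ∈ betaSet a.1.2.1 ((d : ℤ) - 1 - a.2) ∧ M < x) ∧ (x : ZMod (2 * d)) = r := by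
  rw [runner, Finset.inr_mem_disjSum, Finset.mem_filter, mem_above hM.2]

lemma phiX_some (d : ℕ) (x : ℤ) (i : ZMod (2 * d)) :
    phiX d x (some i) = (if (x : ZMod (2 * d)) = i then 1 else 0) -
      (if (x : ZMod (2 * d)) = i + 1 then 1 else 0) := by
  have : ((x : ZMod (2 * d)) - 1 = i) ↔ ((x : ZMod (2 * d)) = i + 1) := sub_eq_iff_eq_add
  simp [phiX, Lam, deltaX, Finsupp.single_apply, this]

lemma wtA_some (d : ℕ) [NeZero d] {M : ℤ} {a : (PartitionT × PartitionT) × ℤ}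
    (hM : LowA d M a) (i : ZMod (2 * d)) :
    wtA d a (some i) = 2 * vacX d M (some i) +
      ((runner d M a i).card - (runner d M a (i + 1)).card : ℚ) := by
  rw [wtA, wt_eq, wtOne_eq d _ _ M a.1.1.2 hM.1, wtOne_eq d _ _ M a.1.2.2 hM.2]
  simp only [Finsupp.sub_apply, Finsupp.add_apply, Finsupp.finsetSum_apply, phiX_some,
    Finset.sum_sub_distrib, Finset.sum_boole, runner, Finset.card_disjSum, Finsupp.smul_apply]
  simp only [deltaX, Finsupp.single_apply, reduceCtorEq, if_false, smul_zero]
  push_cast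
  ring

lemma sum_runner (d : ℕ) [NeZero d] {M : ℤ} {a : (PartitionT × PartitionT) × ℤ}
    (hM : LowA d M a) : ((∑ r, (runner d M a r).card : ℕ) : ℤ) = (d : ℤ) - 1 - 2 * M := by
  simp only [runner, Finset.card_disjSum, Finset.sum_add_distrib]
  rw [← Finset.card_eq_sum_card_fiberwise (fun _ _ => Finset.mem_coe.2 (Finset.mem_univ _)),
    ← Finset.card_eq_sum_card_fiberwise (fun _ _ => Finset.mem_coe.2 (Finset.mem_univ _)),
    card_above a.1.1.2, card_above a.1.2.2]
  have h1 := hM.1.1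
  have h2 := hM.2.1
  omega

/-- The `Λ`-coefficients of the weight determine the number of beads on each runner: the
coefficients are the differences between consecutive runners, and the total is fixed. -/
lemma card_runner_eq (d : ℕ) [NeZero d] {M : ℤ} {a b : (PartitionT × PartitionT) × ℤ}
    (ha : LowA d M a) (hb : LowA d M b) (h : ∀ i, wtA d a (some i) = wtA d b (some i))
    (r : ZMod (2 * d)) : (runner d M a r).card = (runner d M b r).card := by
  set D : ZMod (2 * d) → ℤ := fun r => (runner d M a r).card - (runner d M b r).card with hD
  have hstep : ∀ i, D (i + 1) = D i := by
    intro i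
    have := h i
    rw [wtA_some d ha, wtA_some d hb] at this
    have h' : ((runner d M a i).card : ℚ) + (runner d M b (i + 1)).card =
        (runner d M b i).card + (runner d M a (i + 1)).card := by
      linarith
    norm_cast at h'
    simp only [hD]
    omega
  have hconst : ∀ n : ℕ, D (n : ZMod (2 * d)) = D 0 := by
    intro n
    induction n with
    | zero => simp
    | succ n ih => rw [Nat.cast_succ, hstep, ih]
  have hall : ∀ i, D i = D 0 := by
    intro i
    rw [← hconst i.val, ZMod.natCast_zmod_val]
  have hsum : ∑ i, D i = 0 := by
    have h1 := sum_runner d ha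
    have h2 := sum_runner d hb
    simp only [hD, Finset.sum_sub_distrib]
    push_cast at h1 h2
    rw [h1, h2, sub_self]
  rw [Finset.sum_congr rfl (fun i _ => hall i), Finset.sum_const, Finset.card_univ,
    ZMod.card, nsmul_eq_mul] at hsum
  have h0 : D 0 = 0 := by
    rcases mul_eq_zero.1 hsum with h | h
    · exact absurd (Nat.cast_eq_zero.1 h) (NeZero.ne _)
    · exact h
  have := hall r
  rw [h0] at this
  simp only [hD] at this
  omega

/-- The runners of two cocores are initial segments of the same chain, hence comparable. -/
lemma runner_subset {d : ℕ} [NeZero d] {M : ℤ} {a b : (PartitionT × PartitionT) × ℤ}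
    (ha : LowA d M a) (hb : LowA d M b) (ca : IsCocore d a) (cb : IsCocore d b)
    (r : ZMod (2 * d)) (h : ¬ runner d M a r ⊆ runner d M b r) :
    runner d M b r ⊆ runner d M a r := by
  rw [Finset.not_subset] at h
  obtain ⟨u, hu, hu'⟩ := h
  intro v hv
  have A := fun {x y} => @chain_lt d _ _ _ ca.1 ca.2 x y
  have B := fun {x y} => @chain_lt d _ _ _ cb.1 cb.2 x y
  have ca1 := ca.1
  have cb1 := cb.1
  rcases u with x | x <;> rcases v with y | y <;>
    simp only [mem_runner_inl ha, mem_runner_inl hb, mem_runner_inr ha, mem_runner_inr hb] at * <;>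
    rcases lt_trichotomy x y with hlt | heq | hlt <;> grind

lemma cocore_unique (d : ℕ) [NeZero d] {a b : (PartitionT × PartitionT) × ℤ}
    (ca : IsCocore d a) (cb : IsCocore d b) (h : ∀ i, wtA d a (some i) = wtA d b (some i)) :
    a = b := by
  obtain ⟨M1, h1⟩ := exists_low a.1.1.2 a.2
  obtain ⟨M2, h2⟩ := exists_low a.1.2.2 ((d : ℤ) - 1 - a.2)
  obtain ⟨M3, h3⟩ := exists_low b.1.1.2 b.2
  obtain ⟨M4, h4⟩ := exists_low b.1.2.2 ((d : ℤ) - 1 - b.2)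
  obtain ⟨M, hM1, hM2, hM3, hM4⟩ : ∃ M, M ≤ M1 ∧ M ≤ M2 ∧ M ≤ M3 ∧ M ≤ M4 :=
    ⟨min (min M1 M2) (min M3 M4), by omega, by omega, by omega, by omega⟩
  have ha : LowA d M a := ⟨h1 M hM1, h2 M hM2⟩
  have hb : LowA d M b := ⟨h3 M hM3, h4 M hM4⟩
  have hrun : ∀ r, runner d M a r = runner d M b r := by
    intro r
    have hc := card_runner_eq d ha hb h r
    by_cases hs : runner d M a r ⊆ runner d M b r
    · exact Finset.eq_of_subset_of_card_le hs hc.ge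
    · exact (Finset.eq_of_subset_of_card_le (runner_subset ha hb ca cb r hs) hc.le).symm
  have hX : above a.1.1.1 a.2 M = above b.1.1.1 b.2 M := by
    ext x
    have := mem_runner_inl ha x x
    rw [hrun, mem_runner_inl hb] at this
    rw [mem_above ha.1, mem_above hb.1]
    simpa using this.symm
  have hY : above a.1.2.1 ((d : ℤ) - 1 - a.2) M = above b.1.2.1 ((d : ℤ) - 1 - b.2) M := by
    ext x
    have := mem_runner_inr ha x x
    rw [hrun, mem_runner_inr hb] at this
    rw [mem_above ha.2, mem_above hb.2]
    simpa using this.symm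
  have ht : a.2 = b.2 := by
    have := congrArg Finset.card hX
    rw [card_above a.1.1.2, card_above b.1.1.2] at this
    have := ha.1.1
    have := hb.1.1
    omega
  -- Equal truncations give equal beta-sets, and a partition enumerates its beta-set decreasingly.
  have hpart : ∀ (f g : PartitionT) (c : ℤ), Low f.1 c M → Low g.1 c M →
      above f.1 c M = above g.1 c M → f = g := by
    intro f g c hf hg hfg
    have hβ : betaSet f.1 c = betaSet g.1 c := by
      ext x
      rcases le_or_gt x M with hx | hx
      · exact ⟨fun _ => mem_beta_of_le hg hx, fun _ => mem_beta_of_le hf hx⟩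
      · have e1 := mem_above hf x
        have e2 := mem_above hg x
        rw [hfg] at e1
        tauto
    have hr : Set.range (fun i : ℕ => (f.1 i : ℤ) + c - i) =
        Set.range (fun i : ℕ => (g.1 i : ℤ) + c - i) := by
      ext x
      have := Set.ext_iff.1 hβ x
      simp only [betaSet, Set.mem_ofPred_eq] at this
      simp only [Set.mem_range, eq_comm (b := x)]
      exact this
    have := (StrictMono.range_inj (β := ℕ) (γ := ℤᵒᵈ) (beta_strictAnti f.2 c).dual_right
      (beta_strictAnti g.2 c).dual_right).1 hr
    apply Subtype.ext
    funext i
    have := congrFun this i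
    have h' : (f.1 i : ℤ) + c - i = (g.1 i : ℤ) + c - i := this
    omega
  obtain ⟨⟨a1, a2⟩, s⟩ := a
  obtain ⟨⟨b1, b2⟩, s'⟩ := b
  simp only at ht
  subst ht
  rw [hpart a1 b1 _ ha.1 hb.1 hX, hpart a2 b2 _ ha.2 hb.2 hY]

lemma connected_of_wt_eq (d : ℕ) [NeZero d] {a b : (PartitionT × PartitionT) × ℤ}
    (h : wtA d a = wtA d b) : CohookConnected d a b := by
  obtain ⟨a', ha, ca⟩ := exists_cocore d _ a rfl
  obtain ⟨b', hb, cb⟩ := exists_cocore d _ b rfl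
  have key : ∀ {a a' : (PartitionT × PartitionT) × ℤ}, CohookConnected d a a' →
      ∀ i, wtA d a (some i) = wtA d a' (some i) := by
    intro a a' h i
    have := congrArg (fun v : Xspace d => v (some i)) (connected_invariant d h)
    simpa [deltaX] using this
  have : a' = b' := cocore_unique d ca cb fun i => by
    rw [← key ha, ← key hb, h]
  subst this
  exact ha.trans (connected_symm d hb)

/-! ### The twist by `σ_*` -/

lemma sigma_none (d : ℕ) (v : Xspace d) : sigmaStar d v none = v none := by
  simp only [sigmaStar, Finsupp.domLCongr_apply, Finsupp.domCongr_apply,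
    Finsupp.equivMapDomain_apply]
  rfl

lemma sigma_sq (d : ℕ) : sigmaStar d ^ (2 : ℤ) = 1 := by
  rw [zpow_ofNat, pow_two]
  ext v i
  rw [LinearEquiv.mul_apply]
  simp only [sigmaStar, Finsupp.domLCongr_apply, Finsupp.domCongr_apply,
    Finsupp.equivMapDomain_apply]
  cases i with
  | none => rfl
  | some i => exact congrArg (fun j => v (some j)) (neg_neg i)

lemma sigma_zpow_none (d : ℕ) (t : ℤ) (v : Xspace d) : (sigmaStar d ^ t) v none = v none := by
  rcases Int.even_or_odd' t with ⟨k, rfl | rfl⟩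
  · rw [zpow_mul, sigma_sq, one_zpow]; rfl
  · rw [zpow_add, zpow_mul, sigma_sq, one_zpow, one_mul, zpow_one, sigma_none]

lemma sigma_zpow_eq (d : ℕ) {t t' : ℤ} (h : (2 : ℤ) ∣ t - t') :
    sigmaStar d ^ t = sigmaStar d ^ t' := by
  obtain ⟨k, hk⟩ := h
  rw [show t = 2 * k + t' by linarith, zpow_add, zpow_mul, sigma_sq, one_zpow, one_mul]

/-- The `δ`-coefficient of `wt(μ, t)` is congruent to `-t/2` modulo `1`. -/
lemma wt_none (d : ℕ) [NeZero d] (f g : ℕ → ℕ) (t : ℤ) :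
    ∃ n : ℤ, 2 * wt d f g t none = 2 * n - t := by
  refine ⟨-(nBox d f t 0 + nBox d g ((d : ℤ) - 1 - t) 0 : ℕ) -
    (t / (2 * d) * (t % (2 * d)) + d * (t / (2 * d)) * (t / (2 * d) - 1)) -
    (((d : ℤ) - 1 - t) / (2 * d) * (((d : ℤ) - 1 - t) % (2 * d)) +
      d * (((d : ℤ) - 1 - t) / (2 * d)) * (((d : ℤ) - 1 - t) / (2 * d) - 1)), ?_⟩
  have halpha : ∀ i : ZMod (2 * d), alphaX d i none = if i = 0 then 1 else 0 := by
    intro i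
    by_cases h : i = 0 <;> simp [alphaX, Lam, deltaX, h]
  rw [wt, DeltaQ_eq, DeltaQ_eq]
  simp only [Finsupp.sub_apply, Finsupp.add_apply, Finsupp.finsetSum_apply, Finsupp.smul_apply,
    halpha, smul_eq_mul, mul_ite, mul_one, mul_zero, Finset.sum_ite_eq', Finset.mem_univ, if_true]
  simp only [Lam, deltaX, Finsupp.single_apply, reduceCtorEq, if_false, if_true]
  push_cast
  ring

lemma parity_of_wt_none (d : ℕ) [NeZero d] {f g f' g' : ℕ → ℕ} {t t' : ℤ}
    (h : wt d f g t none = wt d f' g' t' none) : (2 : ℤ) ∣ t - t' := by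
  obtain ⟨n, hn⟩ := wt_none d f g t
  obtain ⟨n', hn'⟩ := wt_none d f' g' t'
  rw [h, hn'] at hn
  refine ⟨n - n', ?_⟩
  have : ((2 * n' - t' : ℤ) : ℚ) = ((2 * n - t : ℤ) : ℚ) := by push_cast; exact hn
  have := Int.cast_injective this
  linarith

/-- `wt(Θ_t(μ)) = wt(Θ_{t'}(μ'))` if and only if the symbols have the same
rank `|μ¹| + |μ²| + t(t+1)` and `(μ, t)`, `(μ', t')` are connected by a finite sequence
of `d`-cohook removals and additions. -/
theorem statement8 (d : ℕ) [NeZero d] (m1 m2 n1 n2 : PartitionT) (t t' : ℤ) :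
    wtTheta d m1.1 m2.1 t = wtTheta d n1.1 n2.1 t' ↔
      ((psize m1.1 : ℤ) + (psize m2.1 : ℤ) + t * (t + 1) =
          (psize n1.1 : ℤ) + (psize n2.1 : ℤ) + t' * (t' + 1) ∧
        CohookConnected d ((m1, m2), t) ((n1, n2), t')) := by
  have hd : (d : ℚ) ≠ 0 := Nat.cast_ne_zero.2 (NeZero.ne d)
  change _ ↔ rankZ ((m1, m2), t) = rankZ ((n1, n2), t') ∧ _
  constructor
  · intro h
    have hpar : (2 : ℤ) ∣ t - t' := by
      have h0 := congrArg (fun v : Xspace d => v none) h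
      simp only [wtTheta, sigma_zpow_none] at h0
      exact parity_of_wt_none d h0
    rw [wtTheta, wtTheta, sigma_zpow_eq d hpar] at h
    have hw : wtA d ((m1, m2), t) = wtA d ((n1, n2), t') := (sigmaStar d ^ t').injective h
    have hc := connected_of_wt_eq d hw
    refine ⟨?_, hc⟩
    have hi := connected_invariant d hc
    rw [hw] at hi
    have h0 := congrArg (fun v : Xspace d => v none) (add_left_cancel hi)
    simp only [deltaX, Finsupp.smul_apply, Finsupp.single_eq_same, smul_eq_mul, mul_one] at h0
    field_simp at h0
    exact_mod_cast h0
  · rintro ⟨hr, hc⟩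
    have hi := connected_invariant d hc
    rw [hr] at hi
    have hw : wt d m1.1 m2.1 t = wt d n1.1 n2.1 t' := add_right_cancel hi
    have hpar := parity_of_wt_none d (congrArg (fun v : Xspace d => v none) hw)
    rw [wtTheta, wtTheta, sigma_zpow_eq d hpar, hw]
end

section
/- Let lambda and nu be partitions such that nu can be obtained from lambda by a finite sequence of additions and removals of 2-hooks (equivalently, lambda and nu have the same 2-core). Then a(lambda) + a(lambda*) + |lambda|(|lambda|-1)/2 ≡ a(nu) + a(nu*) + |nu|(|nu|-1)/2 (mod 2), where lambda* denotes the conjugate (transposed) partition of lambda. -/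
/-- The conjugate (transposed) partition: `λ*_j = #{i : λ_i ≥ j}` (0-indexed: part `j+1`
of the conjugate is the number of rows of length `≥ j + 1`). -/
noncomputable def conjFun (f : ℕ → ℕ) : ℕ → ℕ := fun j => Nat.card {i : ℕ | j + 1 ≤ f i}

/-- One step: addition or removal of an `e`-hook. -/
def HookStep (e : ℤ) (a b : PartitionT) : Prop :=
  (∃ x : ℤ, AddHook e a.1 b.1 0 x) ∨ (∃ x : ℤ, AddHook e b.1 a.1 0 x)

theorem psize_eq_sum_s11 {f : ℕ → ℕ} {N : ℕ} (hN : ∀ i, N ≤ i → f i = 0) :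
    psize f = ∑ i ∈ Finset.range N, f i :=
  tsum_eq_sum fun i hi => hN i (by simpa using hi)

theorem aFun_eq_sum {f : ℕ → ℕ} {N : ℕ} (hN : ∀ i, N ≤ i → f i = 0) :
    aFun f = ∑ i ∈ Finset.range N, i * f i :=
  tsum_eq_sum fun i hi => by rw [hN i (by simpa using hi), mul_zero]

theorem conjFun_eq_sum {f : ℕ → ℕ} {N : ℕ} (hN : ∀ i, N ≤ i → f i = 0) (j : ℕ) :
    conjFun f j = ∑ i ∈ Finset.range N, if j < f i then 1 else 0 := by
  have hs : {i : ℕ | j + 1 ≤ f i} = ((Finset.range N).filter fun i => j < f i : Finset ℕ) := by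
    ext i
    simp only [Set.mem_ofPred_eq, Finset.coe_filter, Finset.mem_range]
    constructor
    · intro h
      refine ⟨?_, h⟩
      by_contra hi
      have := hN i (by omega)
      omega
    · exact fun h => h.2
  rw [conjFun, hs, Nat.card_coe_set_eq, Set.ncard_coe_finset, Finset.card_filter]

/-- Each row of length `m` contributes `0 + 1 + ⋯ + (m - 1)` to the `a`-function of the conjugate. -/
theorem aFun_conjFun {f : ℕ → ℕ} (hf : Antitone f) {N : ℕ} (hN : ∀ i, N ≤ i → f i = 0) :
    aFun (conjFun f) = ∑ i ∈ Finset.range N, ∑ j ∈ Finset.range (f i), j := by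
  have hle : ∀ i, f i ≤ f 0 := fun i => hf (Nat.zero_le i)
  have hM : ∀ j, f 0 ≤ j → conjFun f j = 0 := by
    intro j hj
    rw [conjFun_eq_sum hN]
    refine Finset.sum_eq_zero fun i _ => if_neg ?_
    have := hle i
    omega
  rw [aFun_eq_sum hM]
  simp only [conjFun_eq_sum hN, Finset.mul_sum]
  rw [Finset.sum_comm]
  refine Finset.sum_congr rfl fun i _ => ?_
  simp only [mul_ite, mul_one, mul_zero]
  rw [← Finset.sum_filter]
  congr 1
  ext j
  have := hle i
  simp only [Finset.mem_filter, Finset.mem_range]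
  omega

/-- The sum of the contents of the boxes in terms of the elements `f i - i` of the beta-set. -/
theorem two_mul_content_sum {f : ℕ → ℕ} (hf : Antitone f) {N : ℕ} (hN : ∀ i, N ≤ i → f i = 0) :
    2 * ((aFun (conjFun f) : ℤ) - aFun f) =
      ∑ i ∈ Finset.range N, ((f i : ℤ) - i) * ((f i : ℤ) - i - 1)
        - ∑ i ∈ Finset.range N, (i : ℤ) * (i + 1) := by
  rw [aFun_conjFun hf hN, aFun_eq_sum hN]
  push_cast
  rw [← Finset.sum_sub_distrib, ← Finset.sum_sub_distrib, Finset.mul_sum]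
  refine Finset.sum_congr rfl fun i _ => ?_
  have h : ∀ m : ℕ, 2 * (∑ j ∈ Finset.range m, (j : ℤ)) = m * (m - 1) := by
    intro m
    induction m with
    | zero => simp
    | succ k ih => rw [Finset.sum_range_succ, mul_add, ih]; push_cast; ring
  linear_combination h (f i)

/-- The elements `f i - i`, `i < N`, of the beta-set. -/
def betaTrunc (f : ℕ → ℕ) (N : ℕ) : Finset ℤ :=
  (Finset.range N).image fun i => (f i : ℤ) - i

theorem sum_betaTrunc {f : ℕ → ℕ} (hf : Antitone f) (N : ℕ) (g : ℤ → ℤ) :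
    ∑ b ∈ betaTrunc f N, g b = ∑ i ∈ Finset.range N, g ((f i : ℤ) - i) := by
  refine Finset.sum_image fun i _ j _ hij => ?_
  rcases lt_trichotomy i j with h | h | h
  · have := hf h.le
    omega
  · exact h
  · have := hf h.le
    omega

theorem mem_betaTrunc {f : ℕ → ℕ} {N : ℕ} (hN : ∀ i, N ≤ i → f i = 0) (b : ℤ) :
    b ∈ betaTrunc f N ↔ b ∈ betaSet f 0 ∧ -(N : ℤ) < b := by
  simp only [betaTrunc, betaSet, Finset.mem_image, Finset.mem_range, Set.mem_ofPred_eq]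
  constructor
  · rintro ⟨i, hi, rfl⟩
    exact ⟨⟨i, by ring⟩, by omega⟩
  · rintro ⟨⟨i, rfl⟩, hb⟩
    refine ⟨i, ?_, by ring⟩
    by_contra hi
    have := hN i (by omega)
    omega

theorem mem_betaSet_of_le {f : ℕ → ℕ} {N : ℕ} (hN : ∀ i, N ≤ i → f i = 0) {b : ℤ}
    (hb : b ≤ -(N : ℤ)) : b ∈ betaSet f 0 := by
  refine ⟨(-b).toNat, ?_⟩
  rw [hN _ (by omega)]
  omega

/-- Adding a 2-hook changes a sum over the beta-set only through the moved element. -/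
theorem sum_beta_of_addHook {f k : ℕ → ℕ} (hf : Antitone f) (hk : Antitone k) {N : ℕ}
    (hfN : ∀ i, N ≤ i → f i = 0) (hkN : ∀ i, N ≤ i → k i = 0) {x : ℤ}
    (h : AddHook 2 f k 0 x) (g : ℤ → ℤ) :
    ∑ i ∈ Finset.range N, g ((k i : ℤ) - i) =
      ∑ i ∈ Finset.range N, g ((f i : ℤ) - i) - g x + g (x + 2) := by
  obtain ⟨hx, hx2, hE⟩ := h
  -- `x` has left the beta-set of `k`, which contains every integer `≤ -N`
  have hxN : -(N : ℤ) < x := by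
    by_contra hle
    have hmem := mem_betaSet_of_le hkN (b := x) (by omega)
    rw [hE] at hmem
    simp at hmem
  have hset : betaTrunc k N = insert (x + 2) ((betaTrunc f N).erase x) := by
    ext b
    rw [mem_betaTrunc hkN, hE, Finset.mem_insert, Finset.mem_erase, mem_betaTrunc hfN]
    simp only [Set.mem_union, Set.mem_sdiff, Set.mem_singleton_iff]
    constructor
    · tauto
    · rintro (rfl | h)
      · exact ⟨Or.inr rfl, by omega⟩
      · tauto
  have hnot : x + 2 ∉ (betaTrunc f N).erase x := by
    rw [Finset.mem_erase, mem_betaTrunc hfN]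
    tauto
  have hxm : x ∈ betaTrunc f N := (mem_betaTrunc hfN x).2 ⟨hx, hxN⟩
  rw [← sum_betaTrunc hk, ← sum_betaTrunc hf, hset, Finset.sum_insert hnot,
    ← Finset.add_sum_erase _ g hxm]
  ring

theorem modEq_of_addHook (lam nu : PartitionT) (x : ℤ) (h : AddHook 2 lam.1 nu.1 0 x) :
    ((aFun lam.1 : ℤ) + (aFun (conjFun lam.1) : ℤ) + ((psize lam.1).choose 2 : ℤ)) ≡
      ((aFun nu.1 : ℤ) + (aFun (conjFun nu.1) : ℤ) + ((psize nu.1).choose 2 : ℤ)) [ZMOD 2] := by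
  obtain ⟨f, hf, N₁, h₁⟩ := lam
  obtain ⟨k, hk, N₂, h₂⟩ := nu
  simp only at h ⊢
  have hfN : ∀ i, max N₁ N₂ ≤ i → f i = 0 := fun i hi => h₁ i (le_trans (le_max_left _ _) hi)
  have hkN : ∀ i, max N₁ N₂ ≤ i → k i = 0 := fun i hi => h₂ i (le_trans (le_max_right _ _) hi)
  have hcontent : ((aFun (conjFun k) : ℤ) - aFun k)
      = ((aFun (conjFun f) : ℤ) - aFun f) + (2 * x + 1) := by
    have e := sum_beta_of_addHook hf hk hfN hkN h fun b => b * (b - 1)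
    have ef := two_mul_content_sum hf hfN
    have ek := two_mul_content_sum hk hkN
    linarith
  have hsize : psize k = psize f + 2 := by
    have e := sum_beta_of_addHook hf hk hfN hkN h fun b => b
    simp only [Finset.sum_sub_distrib] at e
    zify
    rw [psize_eq_sum_s11 hfN, psize_eq_sum_s11 hkN]
    push_cast
    linarith
  have hchoose : (psize k).choose 2 = (psize f).choose 2 + 2 * psize f + 1 := by
    rw [hsize, Nat.choose_succ_succ' (psize f + 1) 1, Nat.choose_succ_succ' (psize f) 1]
    simp
    ring
  rw [hchoose, Int.modEq_iff_dvd]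
  push_cast
  exact ⟨(aFun k : ℤ) - aFun f + x + psize f + 1, by linarith⟩

/-- if `λ` and `ν` are connected by a finite sequence of additions/removals
of `2`-hooks (i.e. have the same `2`-core), then
`a(λ) + a(λ*) + |λ|(|λ|-1)/2 ≡ a(ν) + a(ν*) + |ν|(|ν|-1)/2 (mod 2)`. -/
theorem statement11 (lam nu : PartitionT)
    (h : Relation.ReflTransGen (HookStep 2) lam nu) :
    ((aFun lam.1 : ℤ) + (aFun (conjFun lam.1) : ℤ) + ((psize lam.1).choose 2 : ℤ)) ≡
      ((aFun nu.1 : ℤ) + (aFun (conjFun nu.1) : ℤ) + ((psize nu.1).choose 2 : ℤ)) [ZMOD 2] := by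
  induction h with
  | refl => exact Int.ModEq.refl _
  | tail _ hstep ih =>
    rcases hstep with ⟨x, hx⟩ | ⟨x, hx⟩
    · exact ih.trans (modEq_of_addHook _ _ x hx)
    · exact ih.trans (modEq_of_addHook _ _ x hx).symm
end

section
/- Let l >= 1. For every partition lambda and every d ∈ Z there exists a unique pair (mu, s), with mu = (mu^1, ..., mu^l) an l-tuple of partitions and s = (s_1, ..., s_l) ∈ Z^l, such that beta_d(lambda) = ⊔_{p=1}^{l} (p - l + l*beta_{s_p}(mu^p)) (disjoint union). Moreover s_1 + ... + s_l = d, and the resulting map tau_l : (partitions) × Z -> (l-tuples of partitions) × Z^l, (lambda, d) ↦ (mu, s), is a bijection. -/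
/-- `TauDecomp l lam d mu s` : `β_d(lam) = ⊔_{p=1}^{l} (p - l + l·β_{s_p}(mu^p))`
(the union is automatically disjoint since the pieces lie in distinct residue classes
mod `l`). -/
def TauDecomp (l : ℕ) (lam : ℕ → ℕ) (d : ℤ) (mu : Fin l → (ℕ → ℕ)) (s : Fin l → ℤ) : Prop :=
  betaSet lam d =
    ⋃ p : Fin l, (fun b => ((p : ℕ) : ℤ) + 1 - (l : ℤ) + (l : ℤ) * b) '' betaSet (mu p) (s p)

/-! ### Beta-sets and Maya sets -/

/-- The set of positions of a Maya diagram: contains all small enough integers and is bounded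
above. -/
def IsMaya (B : Set ℤ) : Prop :=
  (∃ a, ∀ x ≤ a, x ∈ B) ∧ ∃ b, ∀ x ∈ B, x ≤ b

lemma betaSet_eq_range (f : ℕ → ℕ) (d : ℤ) :
    betaSet f d = Set.range (fun i : ℕ => (f i : ℤ) + d - i) := by
  ext x
  simp only [betaSet, Set.mem_ofPred_eq, Set.mem_range, eq_comm]

lemma strictAnti_beta {f : ℕ → ℕ} (hf : IsPartition f) (d : ℤ) :
    StrictAnti (fun i : ℕ => (f i : ℤ) + d - i) := by
  intro i j hij
  have := hf.1 hij.le
  dsimp only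
  omega

lemma isMaya_betaSet {f : ℕ → ℕ} (hf : IsPartition f) (d : ℤ) : IsMaya (betaSet f d) := by
  obtain ⟨N, hN⟩ := hf.2
  refine ⟨⟨d - N, fun x hx => ⟨(d - x).toNat, ?_⟩⟩, ⟨f 0 + d, ?_⟩⟩
  · rw [hN _ (by omega)]
    omega
  · rintro x ⟨i, rfl⟩
    have := hf.1 (Nat.zero_le i)
    omega

/-- Two charged partitions with the same beta-set agree: both sequences enumerate it in strictly
decreasing order, and the charges are compared far out, where all parts vanish. -/
lemma betaSet_inj {f g : ℕ → ℕ} (hf : IsPartition f) (hg : IsPartition g) {d e : ℤ}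
    (h : betaSet f d = betaSet g e) : f = g ∧ d = e := by
  rw [betaSet_eq_range, betaSet_eq_range] at h
  have hfg : (fun i : ℕ => (f i : ℤ) + d - i) = fun i : ℕ => (g i : ℤ) + e - i := by
    have := (StrictMono.range_inj (strictAnti_beta hf d).dual_right
      (strictAnti_beta hg e).dual_right).1
    refine this ?_
    exact h
  obtain ⟨M, hM⟩ := hf.2
  obtain ⟨N, hN⟩ := hg.2
  have hde : d = e := by
    have h1 := congrFun hfg (M + N)
    simp only [hM (M + N) (by omega), hN (M + N) (by omega)] at h1
    omega
  refine ⟨funext fun i => ?_, hde⟩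
  have h1 := congrFun hfg i
  omega

/-- Every Maya set is a beta-set: if `x_0 > x_1 > ...` enumerates it, then `x_i + i` is antitone and
eventually constant; that constant is the charge and the excess over it is the partition. -/
lemma exists_betaSet_eq {B : Set ℤ} (hB : IsMaya B) :
    ∃ (f : PartitionT) (d : ℤ), betaSet f.1 d = B := by
  classical
  obtain ⟨⟨a, ha⟩, ⟨b, hb⟩⟩ := hB
  -- `n ↦ b - n` turns `B` into the cofinite set `{n | P n}` of naturals, enumerated by `Nat.nth`.
  let P : ℕ → Prop := fun n => b - n ∈ B
  let A : ℕ := (b - a).toNat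
  have hP : ∀ n, A ≤ n → P n := fun n hn => ha _ (by omega)
  have hinf : {n | P n}.Infinite :=
    Set.infinite_of_forall_exists_gt fun n =>
      ⟨n + A + 1, hP _ (by omega), by omega⟩
  have hmono : StrictMono (Nat.nth P) := Nat.nth_strictMono hinf
  have hcount : ∀ k, Nat.count P (A + k) = Nat.count P A + k := by
    intro k
    induction k with
    | zero => rfl
    | succ k ih => rw [← Nat.add_assoc, Nat.count_succ, ih, if_pos (hP _ (by omega))]; rfl
  have hle : Nat.count P A ≤ A := Nat.count_le P
  -- `c` is the number of gaps, so the enumeration is eventually `i ↦ i + c`.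
  obtain ⟨c, hc⟩ : ∃ c, A = Nat.count P A + c := ⟨_, (Nat.add_sub_cancel' hle).symm⟩
  have hlarge : ∀ i, Nat.count P A ≤ i → Nat.nth P i = i + c := by
    intro i hi
    obtain ⟨k, rfl⟩ := Nat.exists_eq_add_of_le hi
    rw [← hcount, Nat.nth_count (hP _ (by omega)), hcount]
    omega
  have hgap : ∀ i k, Nat.nth P i + k ≤ Nat.nth P (i + k) := by
    intro i k
    induction k with
    | zero => rfl
    | succ k ih =>
      have h1 : Nat.nth P (i + k) < Nat.nth P (i + (k + 1)) := hmono (by omega)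
      omega
  have hbound : ∀ i, Nat.nth P i ≤ c + i := by
    intro i
    have h1 := hgap i (Nat.count P A)
    rw [hlarge (i + Nat.count P A) (by omega)] at h1
    omega
  refine ⟨⟨fun i => c + i - Nat.nth P i, ?_, Nat.count P A, ?_⟩, b - c, ?_⟩
  · intro i j hij
    obtain ⟨k, rfl⟩ := Nat.exists_eq_add_of_le hij
    have h1 := hgap i k
    dsimp only
    omega
  · intro i hi
    dsimp only
    rw [hlarge i hi]
    omega
  · have hval : ∀ i : ℕ, ((c + i - Nat.nth P i : ℕ) : ℤ) + (b - c) - i = b - Nat.nth P i := by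
      intro i
      have := hbound i
      omega
    ext x
    simp only [betaSet, Set.mem_ofPred_eq, hval]
    constructor
    · rintro ⟨i, rfl⟩
      exact Nat.nth_mem_of_infinite hinf i
    · intro hx
      have hxb := hb x hx
      have hPx : P (b - x).toNat := by
        change b - ((b - x).toNat : ℤ) ∈ B
        rwa [show b - ((b - x).toNat : ℤ) = x by omega]
      refine ⟨Nat.count P (b - x).toNat, ?_⟩
      rw [Nat.nth_count hPx]
      omega

/-- The charge is read off by counting the elements of the beta-set above a low threshold. -/
lemma ncard_betaSet {f : ℕ → ℕ} (hf : IsPartition f) (d : ℤ) :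
    ∃ N₀ : ℤ, ∀ N ≤ N₀, ((betaSet f d ∩ Set.Ioi N).ncard : ℤ) = d - N := by
  obtain ⟨M, hM⟩ := hf.2
  refine ⟨d - M, fun N hN => ?_⟩
  -- The elements above `N` are those of index less than `d - N`.
  have himage : betaSet f d ∩ Set.Ioi N =
      (fun i : ℕ => (f i : ℤ) + d - i) '' (Finset.range (d - N).toNat : Set ℕ) := by
    ext x
    simp only [betaSet, Set.mem_inter_iff, Set.mem_ofPred_eq, Set.mem_Ioi, Set.mem_image,
      Finset.coe_range, Set.mem_Iio]
    constructor
    · rintro ⟨⟨i, rfl⟩, hi⟩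
      refine ⟨i, ?_, rfl⟩
      by_contra hlt
      rw [hM i (by omega)] at hi
      omega
    · rintro ⟨i, hi, rfl⟩
      exact ⟨⟨i, rfl⟩, by omega⟩
  rw [himage, Set.ncard_image_of_injective _ (strictAnti_beta hf d).injective,
    Set.ncard_coe_finset, Finset.card_range]
  omega

lemma finite_inter_Ioi {B : Set ℤ} (hB : IsMaya B) (N : ℤ) : (B ∩ Set.Ioi N).Finite := by
  obtain ⟨b, hb⟩ := hB.2
  exact (Set.finite_Icc N b).subset fun x hx => ⟨le_of_lt hx.2, hb x hx.1⟩

/-! ### Runners -/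

lemma exists_runner {l : ℕ} (hl : 1 ≤ l) (x : ℤ) :
    ∃ (p : Fin l) (b : ℤ), ((p : ℕ) : ℤ) + 1 - (l : ℤ) + (l : ℤ) * b = x := by
  have h0 := Int.emod_nonneg (x - 1) (b := (l : ℤ)) (by omega)
  have h1 := Int.emod_lt_of_pos (x - 1) (b := (l : ℤ)) (by omega)
  have h2 := Int.emod_add_mul_ediv (x - 1) l
  refine ⟨⟨((x - 1) % l).toNat, by omega⟩, (x - 1) / l + 1, ?_⟩
  dsimp only
  rw [Int.toNat_of_nonneg h0]
  linarith

lemma lt_runner_iff {l : ℕ} (p : Fin l) (b N : ℤ) :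
    (l : ℤ) * N < ((p : ℕ) : ℤ) + 1 - (l : ℤ) + (l : ℤ) * b ↔ N < b := by
  have hp := p.2
  constructor
  · intro h
    by_contra hb
    have : (l : ℤ) * b ≤ l * N := mul_le_mul_of_nonneg_left (by omega) (by omega)
    omega
  · intro h
    have : (l : ℤ) * (N + 1) ≤ l * b := mul_le_mul_of_nonneg_left (by omega) (by omega)
    rw [mul_add, mul_one] at this
    omega

lemma runner_inj {l : ℕ} {p q : Fin l} {b c : ℤ}
    (h : ((p : ℕ) : ℤ) + 1 - (l : ℤ) + (l : ℤ) * b = ((q : ℕ) : ℤ) + 1 - (l : ℤ) + (l : ℤ) * c) :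
    p = q ∧ b = c := by
  have hbc : b = c := by
    refine le_antisymm (not_lt.1 fun hlt => ?_) (not_lt.1 fun hlt => ?_)
    · have h1 := (lt_runner_iff p b c).2 hlt
      rw [h] at h1
      exact lt_irrefl _ ((lt_runner_iff q c c).1 h1)
    · have h1 := (lt_runner_iff q c b).2 hlt
      rw [← h] at h1
      exact lt_irrefl _ ((lt_runner_iff p b b).1 h1)
  subst hbc
  exact ⟨Fin.ext (by omega), rfl⟩

lemma mem_iUnion_runner {l : ℕ} (C : Fin l → Set ℤ) (p : Fin l) (b : ℤ) :
    ((p : ℕ) : ℤ) + 1 - (l : ℤ) + (l : ℤ) * b ∈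
      (⋃ q : Fin l, (fun b => ((q : ℕ) : ℤ) + 1 - (l : ℤ) + (l : ℤ) * b) '' C q) ↔ b ∈ C p := by
  simp only [Set.mem_iUnion, Set.mem_image]
  constructor
  · rintro ⟨q, c, hc, h⟩
    obtain ⟨rfl, rfl⟩ := runner_inj h
    exact hc
  · exact fun h => ⟨p, b, h, rfl⟩

lemma tauDecomp_iff {l : ℕ} (hl : 1 ≤ l) (lam : ℕ → ℕ) (d : ℤ) (mu : Fin l → (ℕ → ℕ))
    (s : Fin l → ℤ) :
    TauDecomp l lam d mu s ↔ ∀ p : Fin l, betaSet (mu p) (s p) =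
      {b | ((p : ℕ) : ℤ) + 1 - (l : ℤ) + (l : ℤ) * b ∈ betaSet lam d} := by
  unfold TauDecomp
  constructor
  · intro h p
    ext b
    rw [Set.mem_ofPred_eq, h]
    exact (mem_iUnion_runner (fun q => betaSet (mu q) (s q)) p b).symm
  · intro h
    ext x
    obtain ⟨p, b, rfl⟩ := exists_runner hl x
    rw [mem_iUnion_runner (fun q => betaSet (mu q) (s q)) p b, h p, Set.mem_ofPred_eq]

lemma isMaya_runner {l : ℕ} (hl : 1 ≤ l) {B : Set ℤ} (hB : IsMaya B) (p : Fin l) :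
    IsMaya {b | ((p : ℕ) : ℤ) + 1 - (l : ℤ) + (l : ℤ) * b ∈ B} := by
  obtain ⟨⟨a, ha⟩, ⟨c, hc⟩⟩ := hB
  have hp := p.2
  refine ⟨⟨-|a|, fun x hx => ha _ ?_⟩, ⟨|c| + 1, fun x hx => ?_⟩⟩
  · have h1 : (l : ℤ) * x ≤ 1 * x :=
      mul_le_mul_of_nonpos_right (by omega) (by have := abs_nonneg a; omega)
    have := neg_abs_le a
    omega
  · have h1 := hc _ hx
    by_contra hlt
    have h2 := (lt_runner_iff p x (|c| + 1)).2 (by omega)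
    have h3 : 1 * (|c| + 1) ≤ (l : ℤ) * (|c| + 1) :=
      mul_le_mul_of_nonneg_right (by omega) (by positivity)
    have := le_abs_self c
    omega

lemma isMaya_iUnion_runner {l : ℕ} (hl : 1 ≤ l) {C : Fin l → Set ℤ} (hC : ∀ p, IsMaya (C p)) :
    IsMaya (⋃ p : Fin l, (fun b => ((p : ℕ) : ℤ) + 1 - (l : ℤ) + (l : ℤ) * b) '' C p) := by
  choose a ha using fun p => (hC p).1
  choose c hc using fun p => (hC p).2
  obtain ⟨a₀, ha₀⟩ := (Set.finite_range a).bddBelow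
  obtain ⟨c₀, hc₀⟩ := (Set.finite_range c).bddAbove
  refine ⟨⟨l * a₀, fun x hx => ?_⟩, ⟨l * c₀, fun x hx => ?_⟩⟩
  · obtain ⟨p, b, rfl⟩ := exists_runner hl x
    rw [mem_iUnion_runner]
    refine ha p b (le_trans ?_ (ha₀ ⟨p, rfl⟩))
    exact not_lt.1 fun h => not_lt.2 hx ((lt_runner_iff p b a₀).2 h)
  · obtain ⟨p, b, rfl⟩ := exists_runner hl x
    rw [mem_iUnion_runner] at hx
    have h1 := (hc p b hx).trans (hc₀ ⟨p, rfl⟩)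
    exact not_lt.1 fun h => not_lt.2 h1 ((lt_runner_iff p b c₀).1 h)

/-! ### The sum of the charges -/

lemma sum_charge {l : ℕ} (hl : 1 ≤ l) {lam : ℕ → ℕ} {d : ℤ} {mu : Fin l → (ℕ → ℕ)}
    {s : Fin l → ℤ} (hlam : IsPartition lam) (hmu : ∀ p, IsPartition (mu p))
    (h : TauDecomp l lam d mu s) : ∑ p, s p = d := by
  obtain ⟨N₀, hN₀⟩ := ncard_betaSet hlam d
  choose K hK using fun p => ncard_betaSet (hmu p) (s p)
  obtain ⟨K₀, hK₀⟩ := (Set.finite_range K).bddBelow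
  obtain ⟨N, hNN, hNK, hN0⟩ : ∃ N : ℤ, N ≤ N₀ ∧ N ≤ K₀ ∧ N ≤ 0 :=
    ⟨min N₀ (min K₀ 0), by omega, by omega, by omega⟩
  have hlN : (l : ℤ) * N ≤ N₀ := by
    have h1 : (l : ℤ) * N ≤ 1 * N := mul_le_mul_of_nonpos_right (by omega) hN0
    omega
  have hcut : betaSet lam d ∩ Set.Ioi (l * N) =
      ⋃ p : Fin l, (fun b => ((p : ℕ) : ℤ) + 1 - (l : ℤ) + (l : ℤ) * b) ''
        (betaSet (mu p) (s p) ∩ Set.Ioi N) := by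
    ext x
    obtain ⟨p, b, rfl⟩ := exists_runner hl x
    rw [mem_iUnion_runner (fun q => betaSet (mu q) (s q) ∩ Set.Ioi N), Set.mem_inter_iff,
      Set.mem_inter_iff, Set.mem_Ioi, Set.mem_Ioi, lt_runner_iff, (tauDecomp_iff hl _ _ _ _).1 h p,
      Set.mem_ofPred_eq]
  have hcard : (betaSet lam d ∩ Set.Ioi (l * N)).ncard =
      ∑ p, (betaSet (mu p) (s p) ∩ Set.Ioi N).ncard := by
    rw [hcut, Set.ncard_iUnion_of_finite, finsum_eq_sum_of_fintype]
    · refine Finset.sum_congr rfl fun p _ => Set.ncard_image_of_injective _ fun b c hbc => ?_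
      exact (runner_inj hbc).2
    · exact fun p => (finite_inter_Ioi (isMaya_betaSet (hmu p) (s p)) N).image _
    · intro p q hpq
      refine Set.disjoint_left.2 ?_
      rintro x ⟨b, -, rfl⟩ ⟨c, -, hc⟩
      exact hpq (runner_inj hc).1.symm
  have h1 := hN₀ _ hlN
  rw [hcard, Nat.cast_sum, Finset.sum_congr rfl fun p _ =>
    hK p N (hNK.trans (hK₀ ⟨p, rfl⟩)), Finset.sum_sub_distrib, Finset.sum_const,
    Finset.card_univ, Fintype.card_fin, nsmul_eq_mul] at h1
  linarith

/-- existence and uniqueness of the `l`-quotient data: for every charged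
partition `(λ, d)` there is a unique pair `(μ, s)` with
`β_d(λ) = ⊔_p (p - l + l β_{s_p}(μ^p))`; moreover `s_1 + ⋯ + s_l = d`, and conversely
every `(μ, s)` arises from a unique `(λ, d)` (so `τ_l` is a bijection). -/
theorem statement14 (l : ℕ) (hl : 1 ≤ l) :
    (∀ lam : ℕ → ℕ, IsPartition lam → ∀ d : ℤ,
      ∃! p : (Fin l → PartitionT) × (Fin l → ℤ),
        TauDecomp l lam d (fun q => (p.1 q).1) p.2) ∧
    (∀ (lam : ℕ → ℕ) (d : ℤ) (mu : Fin l → (ℕ → ℕ)) (s : Fin l → ℤ),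
      IsPartition lam → (∀ p, IsPartition (mu p)) → TauDecomp l lam d mu s →
      ∑ p, s p = d) ∧
    (∀ (mu : Fin l → PartitionT) (s : Fin l → ℤ),
      ∃! q : PartitionT × ℤ, TauDecomp l q.1.1 q.2 (fun p => (mu p).1) s) := by
  refine ⟨fun lam hlam d => ?_, fun lam d mu s hlam hmu h => sum_charge hl hlam hmu h,
    fun mu s => ?_⟩
  · choose mu s hmu using fun p =>
      exists_betaSet_eq (isMaya_runner hl (isMaya_betaSet hlam d) p)
    refine ⟨(mu, s), (tauDecomp_iff hl _ _ _ _).2 hmu, ?_⟩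
    rintro ⟨nu, t⟩ h
    have hinj := fun p => betaSet_inj (nu p).2 (mu p).2
      (((tauDecomp_iff hl _ _ _ _).1 h p).trans (hmu p).symm)
    exact Prod.ext (funext fun p => Subtype.ext (hinj p).1) (funext fun p => (hinj p).2)
  · obtain ⟨lam, d, h⟩ := exists_betaSet_eq
      (isMaya_iUnion_runner hl fun p => isMaya_betaSet (mu p).2 (s p))
    refine ⟨(lam, d), h, ?_⟩
    rintro ⟨nu, e⟩ h'
    have hinj := betaSet_inj nu.2 lam.2 (Eq.trans h' h.symm)
    exact Prod.ext (Subtype.ext hinj.1) hinj.2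
end

section
/- Let mu be a partition, s ∈ Z, f >= 1, c ∈ Z, and let N be an integer with N >= l(mu) - s, where l(mu) is the number of nonzero parts of mu. Then (number of addable boxes of mu whose s-shifted content is ≡ c mod f) minus (number of removable boxes of mu whose s-shifted content is ≡ c mod f) equals #{x ∈ beta_s(mu) : x >= -N, x ≡ c (mod f)} minus #{x ∈ beta_s(mu) : x >= -N + 1, x ≡ c + 1 (mod f)}. -/
/-- An antitone, eventually zero sequence vanishes from the index `l(μ)` on. -/
lemma part_eq_zero_of_card_le {mu : ℕ → ℕ} (hmu : IsPartition mu) {i : ℕ}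
    (hi : Nat.card {i : ℕ | mu i ≠ 0} ≤ i) : mu i = 0 := by
  obtain ⟨hanti, K, hK⟩ := hmu
  by_contra h
  have hfin : {i : ℕ | mu i ≠ 0}.Finite :=
    (Set.finite_lt_nat K).subset fun j hj => by
      by_contra hjK
      exact hj (hK j (not_lt.mp hjK))
  -- Rows `0, …, i` would all be nonzero, giving `i + 1` nonzero parts.
  have hsub : ((Finset.range (i + 1) : Finset ℕ) : Set ℕ) ⊆ {i : ℕ | mu i ≠ 0} := by
    intro j hj
    have hji : j ≤ i := by simpa [Nat.lt_succ_iff] using hj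
    have := hanti hji
    show mu j ≠ 0
    omega
  have hle := Set.ncard_le_ncard hsub hfin
  rw [Set.ncard_coe_finset, Finset.card_range, ← Nat.card_coe_set_eq] at hle
  omega

open Classical in
/-- The cardinality of a set of naturals below `n`, as a sum of indicators. -/
lemma ncard_eq_sum_range (p : ℕ → Prop) (n : ℕ) (h : ∀ i, p i → i < n) :
    ({i | p i}.ncard : ℤ) = ∑ i ∈ Finset.range n, if p i then 1 else 0 := by
  have : {i | p i} = ((Finset.range n).filter p : Finset ℕ) := by
    ext i
    simpa using h i
  rw [this, Set.ncard_coe_finset, Finset.sum_boole]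

/-- Beta-numbers of distinct rows are distinct, so a subset of the beta-set can be counted by
rows. -/
lemma ncard_betaSet_eq {mu : ℕ → ℕ} (hanti : Antitone mu) (s : ℤ) (q : ℤ → Prop) :
    {x : ℤ | x ∈ betaSet mu s ∧ q x}.ncard = {i : ℕ | q ((mu i : ℤ) + s - i)}.ncard := by
  have hinj : Function.Injective fun i : ℕ => (mu i : ℤ) + s - i := by
    apply StrictAnti.injective
    intro i j hij
    have := hanti hij.le
    dsimp only
    omega
  rw [← Set.ncard_image_of_injective _ hinj]
  congr 1
  ext x
  constructor
  · rintro ⟨⟨i, rfl⟩, hq⟩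
    exact ⟨i, hq, rfl⟩
  · rintro ⟨i, hq, rfl⟩
    exact ⟨⟨i, rfl⟩, hq⟩

/-- (addable boxes of content `≡ c`) − (removable boxes of content `≡ c`)
equals `#{x ∈ β_s(μ) : x ≥ -N, x ≡ c (mod f)} − #{x ∈ β_s(μ) : x ≥ -N+1, x ≡ c+1 (mod f)}`
whenever `N ≥ l(μ) - s`. Boxes are 0-indexed: row `i` has an addable box iff `i = 0` or
`μ_i < μ_{i-1}` (content `s + μ_i - i`), and a removable box iff `μ_{i+1} < μ_i`
(content `s + μ_i - 1 - i`). -/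
theorem statement16 (mu : ℕ → ℕ) (hmu : IsPartition mu) (s : ℤ) (f : ℕ) (hf : 1 ≤ f)
    (c : ℤ) (N : ℤ) (hN : (Nat.card {i : ℕ | mu i ≠ 0} : ℤ) - s ≤ N) :
    (({i : ℕ | (i = 0 ∨ mu i < mu (i - 1)) ∧
        (f : ℤ) ∣ (s + (mu i : ℤ) - (i : ℤ) - c)}.ncard : ℤ) -
      ({i : ℕ | mu (i + 1) < mu i ∧
        (f : ℤ) ∣ (s + (mu i : ℤ) - 1 - (i : ℤ) - c)}.ncard : ℤ)) =
    (({x : ℤ | x ∈ betaSet mu s ∧ -N ≤ x ∧ (f : ℤ) ∣ (x - c)}.ncard : ℤ) -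
      ({x : ℤ | x ∈ betaSet mu s ∧ -N + 1 ≤ x ∧ (f : ℤ) ∣ (x - (c + 1))}.ncard : ℤ)) := by
  classical
  have hanti := hmu.1
  -- The cutoff `-N` of the beta-set is the beta-number of row `M = N + s`.
  obtain ⟨M, hM⟩ : ∃ M : ℕ, (M : ℤ) = N + s := ⟨(N + s).toNat, by omega⟩
  have hzero : ∀ i, M ≤ i → mu i = 0 := fun i hi =>
    part_eq_zero_of_card_le hmu (by omega)
  have hle : ∀ i : ℕ, -N ≤ (mu i : ℤ) + s - i ↔ i < M + 1 := by
    intro i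
    rcases le_or_gt M i with h | h
    · have := hzero i h
      omega
    · omega
  have hlt : ∀ i : ℕ, -N + 1 ≤ (mu i : ℤ) + s - i ↔ i < M := by
    intro i
    rcases le_or_gt M i with h | h
    · have := hzero i h
      omega
    · omega
  rw [ncard_betaSet_eq hanti s (fun x => -N ≤ x ∧ (f : ℤ) ∣ (x - c)),
    ncard_betaSet_eq hanti s (fun x => -N + 1 ≤ x ∧ (f : ℤ) ∣ (x - (c + 1))),
    ncard_eq_sum_range _ (M + 1), ncard_eq_sum_range _ M, ncard_eq_sum_range _ (M + 1),
    ncard_eq_sum_range _ M]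
  rotate_left
  · exact fun i hi => (hlt i).1 hi.1
  · exact fun i hi => (hle i).1 hi.1
  · rintro i ⟨hi, -⟩
    by_contra h
    have := hzero i (not_lt.mp h)
    omega
  · rintro i ⟨hi, -⟩
    by_contra h
    have := hzero (i - 1) (by omega)
    omega
  rw [Finset.sum_range_succ', Finset.sum_range_succ' _ M,
    add_sub_right_comm (Finset.sum _ _),
    add_sub_right_comm (Finset.sum _ _), ← Finset.sum_sub_distrib, ← Finset.sum_sub_distrib]
  congr 1
  · apply Finset.sum_congr rfl
    intro i hi
    have hiM := Finset.mem_range.1 hi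
    simp only [hle, hlt, hiM, Nat.succ_lt_succ_iff, true_and, Nat.add_sub_cancel,
      Nat.add_eq_zero_iff, one_ne_zero, and_false, false_or]
    have e1 : (mu (i + 1) : ℤ) + s - ((i + 1 : ℕ) : ℤ) - c
        = s + (mu (i + 1) : ℤ) - ((i + 1 : ℕ) : ℤ) - c := by ring
    have e2 : (mu i : ℤ) + s - (i : ℤ) - (c + 1) = s + (mu i : ℤ) - 1 - (i : ℤ) - c := by ring
    rw [e1, e2]
    rcases (hanti (Nat.le_succ i)).lt_or_eq with h | h
    · simp only [Nat.succ_eq_add_one] at h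
      simp only [h, true_and]
    · simp only [Nat.succ_eq_add_one] at h
      have e3 : s + (mu i : ℤ) - ((i + 1 : ℕ) : ℤ) - c = s + (mu i : ℤ) - 1 - (i : ℤ) - c := by
        push_cast
        ring
      simp only [h, lt_irrefl, false_and, e3, sub_self]
  · have e0 : (mu 0 : ℤ) + s - ((0 : ℕ) : ℤ) - c = s + (mu 0 : ℤ) - ((0 : ℕ) : ℤ) - c := by ring
    simp only [hle, Nat.zero_lt_succ, true_and, true_or, e0]
end
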